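/- Let d ≥ 2 be an integer and t > 0 a real number. The Assouad dimensions of G_{t,d} and F_{t,d} are equal, and dim_A G_{t,d} = dim_A F_{t,d} = d if 0 < t < d/(d−1), while dim_A G_{t,d} = dim_A F_{t,d} = d−1 if t ≥ d/(d−1). -/

import Mathlib

/-!
Write `d = n + 1`. Every covering count is made with the cells of the grid of mesh `r`, which is
the same as counting with cubes up to constants depending on `d` only. Since `G ⊆ F`, it suffices
to bound the exponents of `F` from above and those of `G` from below.

*Trivial bounds.* A ball of radius `R` in `ℝ^d` meets `O((R / r) ^ d)` cells, so `d` is always an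
admissible exponent. The graph vanishes at points with an irrational coordinate, so it contains a
dense part of the floor `[0,1]^n × {0}`, and every admissible exponent is at least `n`.

*Upper bound `n` when `t n ≥ n + 1`.* Fix a ball of radius `R` and a mesh `r < R`. Consider the
points of `F` above a horizontal cube of side a small multiple of `ℓ`, at heights at least `ℓ`. Their
denominators satisfy `q ^ (-t) ≥ ℓ`, hence `q ^ (n + 1) ≤ ℓ ^ (-n)` by the assumption on `t`. The
determinant of the integer vectors `(q, p₁, …, p_n)` attached to `n + 1` such points is smaller than
one in absolute value, hence zero, so the points lie in a vertical hyperplane (`exists_hyperplane`).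
Therefore the part of `F` in the ball at heights between `ℓ` and `3 ℓ` meets `O((R / r) ^ n)` cells
(`cellsLE_layer`), and only `O(log (R / r))` dyadic values of `ℓ` are needed between `r` and `3 R`.
So `n + ε` is admissible for all `ε > 0` (`add_mem_assouadExp_Fset`).

*Lower bound `n + 1` when `t n < n + 1`.* Take `N = m B` with `B` much larger than `m`, and cells
of side `1 / N`. The denominators `q` whose height falls into a prescribed one of the levels
`m, …, 2 m - 1` form an interval of length and position comparable to `B ^ (1 / t)`. On average
`φ(q) / q` is bounded below on long intervals, so a positive proportion of these `q` satisfies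
`q ≤ 16 φ(q)` (`eventually_le_card_richDenoms`). Two distinct reduced fractions `p / q`, `p' / q'`
are seldom in the same cell: for `q ≠ q'` there are at most `2 q q' / N` such pairs
(`card_sameCell_mul_le`). The Cauchy–Schwarz inequality then shows that a positive proportion of
the `N ^ n` cells of the level is hit (`le_card_hitCells`), provided that there are more points than
cells; this is where `t n < n + 1` enters. By the pigeonhole principle over the `B ^ n` blocks of
side `1 / B`, one block has `≥ c m ^ (n + 1)` cells hit, with `c` independent of `m`, so every
admissible exponent is at least `n + 1` (`succ_le_of_mem_assouadExp_Gset`).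
-/

open Set MeasureTheory Filter

noncomputable section

/-- Minimal number of closed axis-parallel cubes of side length `δ` needed to cover `S`. -/
def cubeCoverNum (n : ℕ) (δ : ℝ) (S : Set (EuclideanSpace ℝ (Fin n))) : ℕ :=
  sInf {m : ℕ | ∃ c : Fin m → (Fin n → ℝ),
    S ⊆ ⋃ i, {z : EuclideanSpace ℝ (Fin n) | ∀ j, z j ∈ Set.Icc (c i j) (c i j + δ)}}

-- The popcorn pyramid function `f_{t,d}` on `[0,1]^{d-1}`.
open Classical in
def popcornFun (t : ℝ) (d : ℕ) (x : Fin (d-1) → ℝ) : ℝ :=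
  if h : ∃ q : ℕ, ∃ p : Fin (d-1) → ℕ,
      (∀ i, 1 ≤ p i ∧ p i < q ∧ Nat.Coprime (p i) q) ∧ (∀ i, x i = (p i : ℝ) / (q : ℝ))
  then (h.choose : ℝ) ^ (-t)
  else 0

/-- The graph `G_{t,d}` of the popcorn pyramid function, as a subset of `ℝ^d`. -/
def Gset (t : ℝ) (d : ℕ) : Set (EuclideanSpace ℝ (Fin d)) :=
  {z | ∃ x : Fin (d-1) → ℝ, (∀ i, x i ∈ Set.Icc (0:ℝ) 1) ∧
    (∀ i : Fin (d-1), z (Fin.castLE (Nat.sub_le d 1) i) = x i) ∧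
    (∀ j : Fin d, (j : ℕ) = d - 1 → z j = popcornFun t d x)}

/-- The set `F_{t,d} ⊆ ℝ^d`. -/
def Fset (t : ℝ) (d : ℕ) : Set (EuclideanSpace ℝ (Fin d)) :=
  {z | ∃ q : ℕ, ∃ p : Fin (d-1) → ℕ, (∀ i, 1 ≤ p i ∧ p i < q) ∧
      (∀ i : Fin (d-1), z (Fin.castLE (Nat.sub_le d 1) i) = (p i : ℝ) / (q : ℝ)) ∧
      (∀ j : Fin d, (j : ℕ) = d - 1 → z j = (q : ℝ) ^ (-t))} ∪
  {z | (∀ i : Fin (d-1), z (Fin.castLE (Nat.sub_le d 1) i) ∈ Set.Icc (0:ℝ) 1) ∧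
    (∀ j : Fin d, (j : ℕ) = d - 1 → z j = 0)}

/-- Upper box dimension, via covering numbers by closed cubes. -/
def upperBoxDim (n : ℕ) (S : Set (EuclideanSpace ℝ (Fin n))) : ℝ :=
  limsup (fun δ : ℝ => Real.log (cubeCoverNum n δ S) / (-Real.log δ)) (nhdsWithin 0 (Set.Ioi 0))

/-- Lower box dimension, via covering numbers by closed cubes. -/
def lowerBoxDim (n : ℕ) (S : Set (EuclideanSpace ℝ (Fin n))) : ℝ :=
  liminf (fun δ : ℝ => Real.log (cubeCoverNum n δ S) / (-Real.log δ)) (nhdsWithin 0 (Set.Ioi 0))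

/-- Assouad dimension. -/
def assouadDim (n : ℕ) (S : Set (EuclideanSpace ℝ (Fin n))) : ℝ :=
  sInf {α : ℝ | ∃ C : ℝ, 0 < C ∧ ∀ x ∈ S, ∀ r R : ℝ, 0 < r → r < R →
    (cubeCoverNum n r (Metric.closedBall x R ∩ S) : ℝ) ≤ C * (R / r) ^ α}

/-- Upper θ-intermediate dimension (with the convention that `θ = 0` gives Hausdorff dimension).
Covers are finite, which is no loss of generality since all covering sets have diameter
bounded below by `δ^(1/θ) > 0`. -/
def upperIntDim (n : ℕ) (θ : ℝ) (S : Set (EuclideanSpace ℝ (Fin n))) : ℝ :=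
  if θ = 0 then (dimH S).toReal else
  sInf {s : ℝ | 0 ≤ s ∧ ∀ ε : ℝ, 0 < ε → ∃ δ₀ : ℝ, 0 < δ₀ ∧ δ₀ ≤ 1 ∧
    ∀ δ : ℝ, 0 < δ → δ < δ₀ →
    ∃ (m : ℕ) (U : Fin m → Set (EuclideanSpace ℝ (Fin n))),
      S ⊆ (⋃ i, U i) ∧ (∀ i, δ ^ (1/θ) ≤ Metric.diam (U i) ∧ Metric.diam (U i) ≤ δ) ∧
      (∑ i, Metric.diam (U i) ^ s) ≤ ε}

/-- Lower θ-intermediate dimension (with the convention that `θ = 0` gives Hausdorff dimension). -/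
def lowerIntDim (n : ℕ) (θ : ℝ) (S : Set (EuclideanSpace ℝ (Fin n))) : ℝ :=
  if θ = 0 then (dimH S).toReal else
  sInf {s : ℝ | 0 ≤ s ∧ ∀ ε : ℝ, 0 < ε → ∀ δ₀ : ℝ, 0 < δ₀ → δ₀ ≤ 1 →
    ∃ δ : ℝ, 0 < δ ∧ δ < δ₀ ∧
    ∃ (m : ℕ) (U : Fin m → Set (EuclideanSpace ℝ (Fin n))),
      S ⊆ (⋃ i, U i) ∧ (∀ i, δ ^ (1/θ) ≤ Metric.diam (U i) ∧ Metric.diam (U i) ≤ δ) ∧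
      (∑ i, Metric.diam (U i) ^ s) ≤ ε}

/-- `l_t(k,δ) = ⌊(1/(kδ))^(1/t)⌋`. -/
def lfun (t δ : ℝ) (k : ℕ) : ℕ := Nat.floor ((1/((k:ℝ)*δ)) ^ (1/t))

/-- The Duffin–Schaeffer sets `E^{(d-1)}(δ,n) ⊆ ℝ^{d-1}`. -/
def Eset (d : ℕ) (δ : ℝ) (n : ℕ) : Set (EuclideanSpace ℝ (Fin (d-1))) :=
  {z | ∃ m : Fin (d-1) → ℕ, (∀ i, 1 ≤ m i ∧ m i < n ∧ Nat.Coprime (m i) n) ∧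
    ∀ i, z i ∈ Set.Ioo ((m i : ℝ)/(n:ℝ) - δ) ((m i : ℝ)/(n:ℝ) + δ)}

/-- The horizontal-layer input sets `L_{t,d}(δ,k) ⊆ [0,1]^{d-1}`. -/
def Lset (t : ℝ) (d : ℕ) (δ : ℝ) (k : ℕ) : Set (EuclideanSpace ℝ (Fin (d-1))) :=
  {z | ∃ n : ℕ, lfun t δ (k+1) < n ∧ n ≤ lfun t δ k ∧
    ∃ m : Fin (d-1) → ℕ, (∀ i, 1 ≤ m i ∧ m i < n ∧ Nat.Coprime (m i) n) ∧
    ∀ i, z i = (m i : ℝ)/(n:ℝ)}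

end

/-! ### Grid cells and covering numbers -/

/-- The index of the cell of the grid of mesh `r` that contains `z`. -/
noncomputable def gridCell {k : ℕ} (r : ℝ) (z : EuclideanSpace ℝ (Fin k)) : Fin k → ℤ :=
  fun j => ⌊z j / r⌋

/-- `S` meets at most `N` cells of the grid of mesh `r`. -/
def CellsLE {k : ℕ} (r : ℝ) (S : Set (EuclideanSpace ℝ (Fin k))) (N : ℝ) : Prop :=
  ∃ T : Finset (Fin k → ℤ), (∀ z ∈ S, gridCell r z ∈ T) ∧ (T.card : ℝ) ≤ N

lemma CellsLE.mono {k : ℕ} {r : ℝ} {S S' : Set (EuclideanSpace ℝ (Fin k))} {N N' : ℝ}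
    (h : CellsLE r S N) (hS : S' ⊆ S) (hN : N ≤ N') : CellsLE r S' N' := by
  obtain ⟨T, h1, h2⟩ := h
  exact ⟨T, fun z hz => h1 z (hS hz), h2.trans hN⟩

lemma CellsLE.union {k : ℕ} {r : ℝ} {S S' : Set (EuclideanSpace ℝ (Fin k))} {N N' : ℝ}
    (h : CellsLE r S N) (h' : CellsLE r S' N') : CellsLE r (S ∪ S') (N + N') := by
  classical
  obtain ⟨T, h1, h2⟩ := h
  obtain ⟨T', h1', h2'⟩ := h'
  refine ⟨T ∪ T', ?_, ?_⟩
  · rintro z (hz | hz)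
    · exact Finset.mem_union_left _ (h1 z hz)
    · exact Finset.mem_union_right _ (h1' z hz)
  · have : ((T ∪ T').card : ℝ) ≤ T.card + T'.card := by exact_mod_cast Finset.card_union_le T T'
    linarith

lemma CellsLE.biUnion {k : ℕ} {r : ℝ} {ι : Type*} (I : Finset ι)
    {S : ι → Set (EuclideanSpace ℝ (Fin k))} {N : ℝ}
    (h : ∀ i ∈ I, CellsLE r (S i) N) : CellsLE r (⋃ i ∈ I, S i) (I.card * N) := by
  classical
  choose! T h1 h2 using h
  refine ⟨I.biUnion T, ?_, ?_⟩
  · intro z hz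
    simp only [mem_iUnion] at hz
    obtain ⟨i, hi, hz⟩ := hz
    exact Finset.mem_biUnion.2 ⟨i, hi, h1 i hi z hz⟩
  · calc ((I.biUnion T).card : ℝ) ≤ ∑ i ∈ I, ((T i).card : ℝ) := by
          exact_mod_cast Finset.card_biUnion_le
      _ ≤ ∑ _i ∈ I, N := Finset.sum_le_sum h2
      _ = I.card * N := by rw [Finset.sum_const, nsmul_eq_mul]

lemma exists_cover_of_cells {k : ℕ} {r : ℝ} (hr : 0 < r) {S : Set (EuclideanSpace ℝ (Fin k))}
    {T : Finset (Fin k → ℤ)} (hT : ∀ z ∈ S, gridCell r z ∈ T) :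
    T.card ∈ {m : ℕ | ∃ c : Fin m → (Fin k → ℝ),
      S ⊆ ⋃ i, {z : EuclideanSpace ℝ (Fin k) | ∀ j, z j ∈ Set.Icc (c i j) (c i j + r)}} := by
  refine ⟨fun i j => ((T.equivFin.symm i : Fin k → ℤ) j : ℝ) * r, ?_⟩
  intro z hz
  refine mem_iUnion.2 ⟨T.equivFin ⟨_, hT z hz⟩, ?_⟩
  intro j
  simp only [Equiv.symm_apply_apply, gridCell]
  constructor
  · rw [← le_div_iff₀ hr]; exact Int.floor_le _
  · have := (Int.lt_floor_add_one (z j / r)).le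
    rw [div_le_iff₀ hr] at this
    linarith

lemma cubeCoverNum_le_of_cells {k : ℕ} {r : ℝ} (hr : 0 < r)
    {S : Set (EuclideanSpace ℝ (Fin k))} {N : ℝ} (h : CellsLE r S N) :
    (cubeCoverNum k r S : ℝ) ≤ N := by
  obtain ⟨T, h1, h2⟩ := h
  refine le_trans ?_ h2
  exact_mod_cast Nat.sInf_le (exists_cover_of_cells hr h1)

/-- A closed cube of side `r` meets at most two grid slabs in each direction, so a set that meets
many cells needs many cubes. The hypothesis `CellsLE r S N` guarantees that finite covers exist. -/
lemma card_cells_le_cubeCoverNum {k : ℕ} {r : ℝ} (hr : 0 < r)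
    {S : Set (EuclideanSpace ℝ (Fin k))} {N : ℝ} (h : CellsLE r S N)
    {T : Finset (Fin k → ℤ)} (hT : ∀ c ∈ T, ∃ z ∈ S, gridCell r z = c) :
    (T.card : ℝ) ≤ 2 ^ k * cubeCoverNum k r S := by
  classical
  obtain ⟨T₀, h1, -⟩ := h
  have hne : {m : ℕ | ∃ c : Fin m → (Fin k → ℝ),
      S ⊆ ⋃ i, {z : EuclideanSpace ℝ (Fin k) | ∀ j, z j ∈ Set.Icc (c i j) (c i j + r)}}.Nonempty :=
    ⟨_, exists_cover_of_cells hr h1⟩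
  obtain ⟨c, hc⟩ := Nat.sInf_mem hne
  change S ⊆ ⋃ i : Fin (cubeCoverNum k r S), _ at hc
  have hsub : T ⊆ Finset.univ.biUnion (fun i : Fin (cubeCoverNum k r S) =>
      Fintype.piFinset (fun j => ({⌊c i j / r⌋, ⌊c i j / r⌋ + 1} : Finset ℤ))) := by
    intro κ hκ
    obtain ⟨z, hz, rfl⟩ := hT κ hκ
    obtain ⟨i, hi⟩ := mem_iUnion.1 (hc hz)
    refine Finset.mem_biUnion.2 ⟨i, Finset.mem_univ _, Fintype.mem_piFinset.2 fun j => ?_⟩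
    have hj := hi j
    have a1 : ⌊c i j / r⌋ ≤ ⌊z j / r⌋ := Int.floor_le_floor (by gcongr; exact hj.1)
    have a2 : ⌊z j / r⌋ ≤ ⌊c i j / r⌋ + 1 := by
      rw [← Int.floor_add_one]
      refine Int.floor_le_floor ?_
      rw [div_add_one hr.ne']
      gcongr; exact hj.2
    simp only [gridCell, Finset.mem_insert, Finset.mem_singleton]
    omega
  have h3 : T.card ≤ ∑ i : Fin (cubeCoverNum k r S), 2 ^ k := by
    refine (Finset.card_le_card hsub).trans (Finset.card_biUnion_le.trans ?_)
    refine Finset.sum_le_sum fun i _ => ?_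
    rw [Fintype.card_piFinset]
    refine (Finset.prod_le_pow_card _ _ 2 fun j _ => Finset.card_le_two).trans ?_
    simp
  have h4 : T.card ≤ 2 ^ k * cubeCoverNum k r S := by
    simpa [mul_comm] using h3
  exact_mod_cast h4

/-- The number of integers that are integer parts of reals in `[A / r, (A + s) / r]`. -/
lemma card_Icc_floor_le {r A s : ℝ} (hr : 0 < r) (hs : 0 ≤ s) :
    ((Finset.Icc ⌊A / r⌋ ⌊(A + s) / r⌋).card : ℝ) ≤ s / r + 2 := by
  have h0 : ⌊A / r⌋ ≤ ⌊(A + s) / r⌋ := Int.floor_le_floor (by gcongr; linarith)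
  rw [Int.card_Icc]
  have h1 : (((⌊(A + s) / r⌋ + 1 - ⌊A / r⌋).toNat : ℤ) : ℝ)
      = ((⌊(A + s) / r⌋ + 1 - ⌊A / r⌋ : ℤ) : ℝ) := by
    rw [Int.toNat_of_nonneg (by omega)]
  rw [Int.cast_natCast] at h1
  rw [h1]
  push_cast
  have h2 := Int.floor_le ((A + s) / r)
  have h3 := Int.lt_floor_add_one (A / r)
  have h4 : (A + s) / r = A / r + s / r := by ring
  linarith

lemma floor_mem_Icc_floor {r A s x : ℝ} (hr : 0 < r) (h1 : A ≤ x) (h2 : x ≤ A + s) :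
    ⌊x / r⌋ ∈ Finset.Icc ⌊A / r⌋ ⌊(A + s) / r⌋ :=
  Finset.mem_Icc.2 ⟨Int.floor_le_floor (by gcongr), Int.floor_le_floor (by gcongr)⟩

lemma cellsLE_box {k : ℕ} {r : ℝ} (hr : 0 < r) (A s : Fin k → ℝ) (hs : ∀ j, 0 ≤ s j) :
    CellsLE r {z : EuclideanSpace ℝ (Fin k) | ∀ j, A j ≤ z j ∧ z j ≤ A j + s j}
      (∏ j, (s j / r + 2)) := by
  refine ⟨Fintype.piFinset fun j => Finset.Icc ⌊A j / r⌋ ⌊(A j + s j) / r⌋, ?_, ?_⟩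
  · intro z hz
    exact Fintype.mem_piFinset.2 fun j => floor_mem_Icc_floor hr (hz j).1 (hz j).2
  · rw [Fintype.card_piFinset]
    push_cast
    exact Finset.prod_le_prod (fun _ _ => by positivity) fun j _ => card_Icc_floor_le hr (hs j)

lemma abs_coord_sub_le {k : ℕ} {x z : EuclideanSpace ℝ (Fin k)} {R : ℝ}
    (h : z ∈ Metric.closedBall x R) (j : Fin k) : |z j - x j| ≤ R := by
  rw [Metric.mem_closedBall, dist_eq_norm] at h
  have := PiLp.norm_apply_le (z - x) j
  simpa using this.trans h

lemma cellsLE_ball {k : ℕ} {r R : ℝ} (hr : 0 < r) (hR : r < R)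
    (x : EuclideanSpace ℝ (Fin k)) (S : Set (EuclideanSpace ℝ (Fin k))) :
    CellsLE r (Metric.closedBall x R ∩ S) ((4 * (R / r)) ^ k) := by
  have hu : 1 ≤ R / r := by rw [le_div_iff₀ hr]; linarith
  refine (cellsLE_box hr (fun j => x j - R) (fun _ => 2 * R) (fun _ => by linarith)).mono ?_ ?_
  · rintro z ⟨hz, -⟩ j
    have := abs_le.1 (abs_coord_sub_le hz j)
    constructor <;> linarith
  · rw [Finset.prod_const, Finset.card_univ, Fintype.card_fin]
    have : 2 * R / r = 2 * (R / r) := by ring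
    rw [this]
    gcongr
    linarith

/-- The exponents admissible in the definition of the Assouad dimension of `S`. -/
def assouadExp (k : ℕ) (S : Set (EuclideanSpace ℝ (Fin k))) : Set ℝ :=
  {α : ℝ | ∃ C : ℝ, 0 < C ∧ ∀ x ∈ S, ∀ r R : ℝ, 0 < r → r < R →
    (cubeCoverNum k r (Metric.closedBall x R ∩ S) : ℝ) ≤ C * (R / r) ^ α}

lemma natCast_mem_assouadExp (k : ℕ) (S : Set (EuclideanSpace ℝ (Fin k))) :
    (k : ℝ) ∈ assouadExp k S := by
  refine ⟨4 ^ k, by positivity, fun x _ r R hr hR => ?_⟩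
  rw [Real.rpow_natCast, ← mul_pow]
  exact cubeCoverNum_le_of_cells hr (cellsLE_ball hr hR x S)

lemma assouadExp_anti {k : ℕ} {S S' : Set (EuclideanSpace ℝ (Fin k))} (h : S ⊆ S') :
    assouadExp k S' ⊆ assouadExp k S := by
  rintro α ⟨C, hC, H⟩
  refine ⟨C, hC, fun x hx r R hr hR => le_trans ?_ (H x (h hx) r R hr hR)⟩
  obtain ⟨T, hT, -⟩ := cellsLE_ball hr hR x S'
  have hne : {m : ℕ | ∃ c : Fin m → (Fin k → ℝ),
      Metric.closedBall x R ∩ S' ⊆ ⋃ i, {z : EuclideanSpace ℝ (Fin k) |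
        ∀ j, z j ∈ Set.Icc (c i j) (c i j + r)}}.Nonempty :=
    ⟨_, exists_cover_of_cells hr hT⟩
  obtain ⟨c, hc⟩ := Nat.sInf_mem hne
  have : cubeCoverNum k r (Metric.closedBall x R ∩ S)
      ≤ cubeCoverNum k r (Metric.closedBall x R ∩ S') :=
    Nat.sInf_le ⟨c, (inter_subset_inter_right _ h).trans hc⟩
  exact_mod_cast this

/-- If at arbitrarily large ratios `K * m` of scales a set meets at least `c * m ^ s` cells, then
every admissible exponent is at least `s`. -/
lemma le_of_mem_assouadExp {k : ℕ} {S : Set (EuclideanSpace ℝ (Fin k))} {α c K : ℝ} {s : ℕ}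
    (hα : α ∈ assouadExp k S) (hc : 0 < c) (hK : 1 < K)
    (h : ∀ m : ℕ, 1 ≤ m → ∃ x ∈ S, ∃ r : ℝ, 0 < r ∧ ∃ T : Finset (Fin k → ℤ),
      (∀ κ ∈ T, ∃ z ∈ Metric.closedBall x (K * m * r) ∩ S, gridCell r z = κ) ∧
      c * (m : ℝ) ^ s ≤ T.card) : (s : ℝ) ≤ α := by
  obtain ⟨C, hC, H⟩ := hα
  by_contra! hlt
  have hlim := (tendsto_rpow_atTop (sub_pos.2 hlt)).comp tendsto_natCast_atTop_atTop
  obtain ⟨m, hm, hm1⟩ := ((hlim.eventually_gt_atTop (2 ^ k * (C * K ^ α) / c)).and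
    (eventually_ge_atTop 1)).exists
  obtain ⟨x, hx, r, hr, T, hT, hcard⟩ := h m hm1
  have hm1' : (1 : ℝ) ≤ m := by exact_mod_cast hm1
  have hm0 : (0 : ℝ) < m := by linarith
  have hR : r < K * m * r := by
    have : 1 < K * m := by nlinarith
    nlinarith
  have h1 := card_cells_le_cubeCoverNum hr (cellsLE_ball hr hR x S) hT
  have h2 := H x hx r _ hr hR
  rw [mul_div_assoc, div_self hr.ne', mul_one, Real.mul_rpow (by linarith) hm0.le] at h2
  have h3 : c * (m : ℝ) ^ s ≤ 2 ^ k * (C * (K ^ α * (m : ℝ) ^ α)) :=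
    hcard.trans (h1.trans (by gcongr))
  simp only [Function.comp] at hm
  rw [div_lt_iff₀ hc, Real.rpow_sub hm0, Real.rpow_natCast, div_mul_eq_mul_div,
    lt_div_iff₀ (Real.rpow_pos_of_pos hm0 α)] at hm
  nlinarith

/-! ### Rational points with small denominators in a small cube -/

/-- If the rational points `v 0, …, v n` of a cube of side `2ρ` in `ℝⁿ` have common denominators
`q j` whose product is small compared with `ρ⁻ⁿ`, they lie on a hyperplane: the determinant of the
integer vectors `(q j, q j • v j)` is an integer of absolute value less than `1`. -/
lemma det_eq_zero_of_small {n : ℕ} {ρ : ℝ} (hρ : 0 < ρ) (A : Fin n → ℝ)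
    (v : Fin (n + 1) → Fin n → ℝ) (hv : ∀ j i, |v j i - A i| ≤ ρ)
    (q : Fin (n + 1) → ℕ) (p : Fin (n + 1) → Fin n → ℕ) (hq : ∀ j, 1 ≤ q j)
    (hvp : ∀ j i, v j i = (p j i : ℝ) / (q j : ℝ))
    (hsmall : (∏ j, (q j : ℝ)) * ((n + 1).factorial * ρ ^ n) < 1) :
    (Matrix.of fun i j => (Fin.cons 1 (v j) : Fin (n + 1) → ℝ) i).det = 0 := by
  set M : Matrix (Fin (n + 1)) (Fin (n + 1)) ℝ :=
    Matrix.of fun i j => (Fin.cons 1 (v j) : Fin (n + 1) → ℝ) i with hM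
  set M' : Matrix (Fin (n + 1)) (Fin (n + 1)) ℝ :=
    Matrix.of fun i j => (Fin.cons 1 (fun i => v j i - A i) : Fin (n + 1) → ℝ) i with hM'
  set Z : Matrix (Fin (n + 1)) (Fin (n + 1)) ℤ :=
    Matrix.of fun i j => (Fin.cons (q j : ℤ) (fun i => (p j i : ℤ)) : Fin (n + 1) → ℤ) i with hZ
  have hq0 : ∀ j, (q j : ℝ) ≠ 0 := fun j => by
    have := hq j
    positivity
  have hqpos : 0 < ∏ j, (q j : ℝ) := Finset.prod_pos fun j _ => by
    have := hq j
    positivity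
  have h1 : ((Z.det : ℤ) : ℝ) = (∏ j, (q j : ℝ)) * M.det := by
    rw [← Matrix.det_mul_row, Int.cast_det]
    congr 1
    ext i j
    refine Fin.cases ?_ (fun i => ?_) i
    · simp [hZ, hM]
    · simp [hZ, hM, hvp]
      field_simp [hq0 j]
  have h2 : M.det = M'.det := by
    refine Matrix.det_eq_of_forall_row_eq_smul_add_const (Fin.cons 0 A) 0 (by simp) ?_
    intro i j
    refine Fin.cases ?_ (fun i => ?_) i
    · simp [hM, hM']
    · simp [hM, hM']
  have h3 : ρ * |M'.det| ≤ (n + 1).factorial * ρ ^ (n + 1) := by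
    have e := Matrix.det_mul_column (Fin.cons ρ (fun _ => 1) : Fin (n + 1) → ℝ) M'
    rw [Fin.prod_univ_succ] at e
    simp only [Fin.cons_zero, Fin.cons_succ, Finset.prod_const_one, mul_one] at e
    have b := Matrix.det_le (abv := AbsoluteValue.abs) (x := ρ)
      (A := Matrix.of fun i j => (Fin.cons ρ (fun _ => 1) : Fin (n + 1) → ℝ) i * M' i j) ?_
    · rw [e] at b
      simpa [abs_mul, abs_of_pos hρ] using b
    · intro i j
      refine Fin.cases ?_ (fun i => ?_) i
      · simp [hM', abs_of_pos hρ]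
      · simpa [hM'] using hv j i
  have h4 : |M'.det| ≤ (n + 1).factorial * ρ ^ n := by
    have : ρ * |M'.det| ≤ ρ * ((n + 1).factorial * ρ ^ n) := by
      rw [pow_succ] at h3; linarith
    exact le_of_mul_le_mul_left this hρ
  have h5 : |((Z.det : ℤ) : ℝ)| < 1 := by
    rw [h1, h2, abs_mul, abs_of_pos hqpos]
    exact (mul_le_mul_of_nonneg_left h4 hqpos.le).trans_lt hsmall
  have h6 : Z.det = 0 := by
    rw [← Int.cast_abs] at h5
    exact Int.abs_lt_one_iff.1 (by exact_mod_cast h5)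
  rw [h6, Int.cast_zero, eq_comm, mul_eq_zero] at h1
  exact h1.resolve_left hqpos.ne'

/-- Rational points whose denominators satisfy `q ^ (n + 1) ≤ ℓ⁻ⁿ` and which lie in a cube of size
comparable to `ℓ` lie on a common hyperplane. The normal vector is scaled to have a coordinate of
maximal absolute value equal to `1`. -/
lemma exists_hyperplane {n : ℕ} (hn : 1 ≤ n) {ℓ ρ : ℝ} (hℓ : 0 < ℓ)
    (hρ : ρ = ℓ / (2 * (n + 1).factorial)) (A : Fin n → ℝ) (V : Set (Fin n → ℝ))
    (hV : ∀ x ∈ V, (∀ i, |x i - A i| ≤ ρ) ∧ ∃ q : ℕ, ∃ p : Fin n → ℕ,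
      1 ≤ q ∧ (q : ℝ) ^ (n + 1) * ℓ ^ n ≤ 1 ∧ ∀ i, x i = (p i : ℝ) / (q : ℝ)) :
    ∃ (i₀ : Fin n) (a : Fin n → ℝ) (b : ℝ), a i₀ = 1 ∧ (∀ i, |a i| ≤ 1) ∧
      ∀ x ∈ V, ∑ i, a i * x i = b := by
  classical
  have hfac : (1 : ℝ) ≤ (n + 1).factorial := by exact_mod_cast Nat.succ_le_of_lt (Nat.factorial_pos _)
  have hρ0 : 0 < ρ := by rw [hρ]; positivity
  let i₁ : Fin n := ⟨0, hn⟩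
  rcases V.eq_empty_or_nonempty with rfl | ⟨x₀, hx₀⟩
  · exact ⟨i₁, fun _ => 1, 0, rfl, by simp, by simp⟩
  set L : (Fin n → ℝ) → (Fin (n + 1) → ℝ) := fun x => Fin.cons 1 x with hL
  have hdet : ∀ v : Fin (n + 1) → Fin n → ℝ, (∀ j, v j ∈ V) →
      (Matrix.of fun i j => L (v j) i).det = 0 := by
    intro v hv
    choose q p hq hqs hx using fun j => (hV _ (hv j)).2
    refine det_eq_zero_of_small hρ0 A v (fun j i => (hV _ (hv j)).1 i) q p hq hx ?_
    have h1 : (∏ j, (q j : ℝ)) * ℓ ^ n ≤ 1 := by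
      have h : ((∏ j, (q j : ℝ)) * ℓ ^ n) ^ (n + 1) ≤ 1 := by
        have : ((∏ j, (q j : ℝ)) * ℓ ^ n) ^ (n + 1)
            = ∏ j : Fin (n + 1), ((q j : ℝ) ^ (n + 1) * ℓ ^ n) := by
          rw [Finset.prod_mul_distrib, mul_pow, Finset.prod_pow]
          simp
        rw [this]
        exact Finset.prod_le_one (fun j _ => by positivity) fun j _ => hqs j
      exact (pow_le_one_iff_of_nonneg (by positivity) (by omega)).1 h
    have h2 : (n + 1).factorial * ρ ^ n ≤ ℓ ^ n / 2 := by
      rw [hρ, div_pow]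
      have h3 : 2 * ((n + 1).factorial : ℝ) ≤ (2 * (n + 1).factorial) ^ n :=
        le_self_pow₀ (by linarith) (by omega)
      rw [← mul_div_assoc, div_le_div_iff₀ (by positivity) (by positivity)]
      have := mul_le_mul_of_nonneg_left h3 (pow_nonneg hℓ.le n)
      linarith
    have h0 : 0 ≤ ∏ j, (q j : ℝ) := by positivity
    have := mul_le_mul_of_nonneg_left h2 h0
    linarith
  have hspan : Submodule.span ℝ (L '' V) < ⊤ := by
    rw [lt_top_iff_ne_top]
    intro htop
    obtain ⟨s, hs, hspan, hli⟩ := exists_linearIndependent ℝ (L '' V)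
    rw [htop] at hspan
    let bs := Module.Basis.mk hli (by rw [Subtype.range_coe]; exact hspan.ge)
    have : Fintype s := FiniteDimensional.fintypeBasisIndex bs
    have hcard : Fintype.card s = Fintype.card (Fin (n + 1)) := by
      rw [← Module.finrank_eq_card_basis bs]; simp
    let e := (Fintype.equivOfCardEq hcard).symm
    have hw : ∀ j, ∃ x ∈ V, L x = ((e j : s) : Fin (n + 1) → ℝ) := fun j => hs (e j).2
    choose v hvV hvL using hw
    have h0 := hdet v hvV
    have hli' : LinearIndependent ℝ (fun j => ((e j : s) : Fin (n + 1) → ℝ)) :=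
      hli.comp e e.injective
    have hM : (Matrix.of fun i j => L (v j) i)
        = (Matrix.of fun j i => ((e j : s) : Fin (n + 1) → ℝ) i).transpose := by
      ext i j; simp [hvL]
    rw [hM, Matrix.det_transpose] at h0
    have hu := (Matrix.linearIndependent_rows_iff_isUnit
      (A := Matrix.of fun j i => ((e j : s) : Fin (n + 1) → ℝ) i)).1 hli'
    rw [Matrix.isUnit_iff_isUnit_det, h0] at hu
    exact not_isUnit_zero hu
  obtain ⟨f, hf0, hf⟩ := Submodule.exists_le_ker_of_lt_top _ hspan
  -- `f (1, x) = f e₀ + ∑ aᵢ xᵢ`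
  set a : Fin n → ℝ := fun i => f (Pi.single i.succ 1) with ha
  set b : ℝ := f (Pi.single 0 1) with hb
  have hfx : ∀ w : Fin (n + 1) → ℝ, f w = w 0 * b + ∑ i, a i * w i.succ := by
    intro w
    rw [LinearMap.pi_apply_eq_sum_univ f w, Fin.sum_univ_succ]
    have hs : ∀ i : Fin (n + 1), (fun j => if i = j then (1 : ℝ) else 0) = Pi.single i 1 := by
      intro i; ext j; simp [Pi.single_apply, eq_comm]
    simp only [hs, smul_eq_mul, ha, hb, mul_comm]
  have hVf : ∀ x ∈ V, b + ∑ i, a i * x i = 0 := by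
    intro x hx
    have : f (L x) = 0 := hf (Submodule.subset_span ⟨x, hx, rfl⟩)
    rw [hfx] at this
    simpa [hL] using this
  obtain ⟨i₀, -, hi₀⟩ := Finset.exists_max_image Finset.univ (fun i => |a i|) ⟨i₁, Finset.mem_univ _⟩
  have hai₀ : a i₀ ≠ 0 := by
    intro h
    have haz : ∀ i, a i = 0 := fun i => by
      have := hi₀ i (Finset.mem_univ _)
      rw [h, abs_zero] at this
      exact abs_nonpos_iff.1 this
    have hbz : b = 0 := by simpa [haz] using hVf x₀ hx₀
    apply hf0
    ext1 i
    ext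
    simp [hfx, haz, hbz]
  refine ⟨i₀, fun i => a i / a i₀, -b / a i₀, div_self hai₀, fun i => ?_, fun x hx => ?_⟩
  · rw [abs_div]
    exact div_le_one_of_le₀ (hi₀ i (Finset.mem_univ _)) (abs_nonneg _)
  · have : ∑ i, a i / a i₀ * x i = (∑ i, a i * x i) / a i₀ := by
      rw [Finset.sum_div]; exact Finset.sum_congr rfl fun i _ => by ring
    rw [this]
    congr 1
    linarith [hVf x hx]

/-- A piece of a vertical hyperplane in `ℝⁿ⁺¹` of diameter about `ℓ` meets about `(ℓ / r) ^ n`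
cells: up to boundedly many choices, the cell is determined by the coordinates other than `i₀`. -/
lemma cellsLE_hyperplane {n : ℕ} {r ℓ : ℝ} (hr : 0 < r) (hrℓ : r ≤ ℓ) (i₀ : Fin n) (a : Fin n → ℝ)
    (b : ℝ) (ha₀ : a i₀ = 1) (ha : ∀ i, |a i| ≤ 1) (A : Fin (n + 1) → ℝ)
    (S : Set (EuclideanSpace ℝ (Fin (n + 1))))
    (hS : ∀ z ∈ S, (∀ j, A j ≤ z j ∧ z j ≤ A j + 2 * ℓ) ∧ ∑ i : Fin n, a i * z i.castSucc = b) :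
    CellsLE r S ((2 * n + 3) * (4 * (ℓ / r)) ^ n) := by
  classical
  have hu : 1 ≤ ℓ / r := by rw [le_div_iff₀ hr]; linarith
  set g : (Fin (n + 1) → ℤ) → ℝ := fun k => b / r - ∑ i ∈ Finset.univ.erase i₀, a i * k i.castSucc
    with hg
  set I : Fin (n + 1) → Finset ℤ := fun j => if j = i₀.castSucc then Finset.Icc (-(n + 1 : ℤ)) (n + 1)
    else Finset.Icc ⌊A j / r⌋ ⌊(A j + 2 * ℓ) / r⌋ with hI
  refine ⟨(Fintype.piFinset I).image fun k => Function.update k i₀.castSucc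
    (⌊g k⌋ + k i₀.castSucc), ?_, ?_⟩
  · intro z hz
    obtain ⟨hbox, hsum⟩ := hS z hz
    set κ := gridCell r z with hκ
    have hgκ : ∀ t, g (Function.update κ i₀.castSucc t) = g κ := by
      intro t
      simp only [hg]
      congr 1
      refine Finset.sum_congr rfl fun i hi => ?_
      rw [Function.update_of_ne]
      exact fun h => (Finset.mem_erase.1 hi).1 (Fin.castSucc_injective n h)
    have hclose : |z i₀.castSucc / r - g κ| ≤ n := by
      have e1 : z i₀.castSucc / r - g κ
          = ∑ i ∈ Finset.univ.erase i₀, a i * (κ i.castSucc - z i.castSucc / r) := by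
        rw [← Finset.add_sum_erase _ _ (Finset.mem_univ i₀), ha₀, one_mul] at hsum
        simp only [hg, mul_sub, Finset.sum_sub_distrib]
        have : ∑ i ∈ Finset.univ.erase i₀, a i * (z i.castSucc / r)
            = (∑ i ∈ Finset.univ.erase i₀, a i * z i.castSucc) / r := by
          rw [Finset.sum_div]; exact Finset.sum_congr rfl fun i _ => by ring
        rw [this, ← hsum]
        ring
      rw [e1]
      refine (Finset.abs_sum_le_sum_abs _ _).trans ?_
      refine (Finset.sum_le_card_nsmul _ _ 1 fun i _ => ?_).trans ?_
      · rw [abs_mul]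
        refine mul_le_one₀ (ha i) (abs_nonneg _) ?_
        have h1 := Int.floor_le (z i.castSucc / r)
        have h2 := (Int.lt_floor_add_one (z i.castSucc / r)).le
        simp only [hκ, gridCell]
        rw [abs_le]; constructor <;> linarith
      · rw [nsmul_eq_mul, mul_one]
        have : (Finset.univ.erase i₀).card ≤ n := by
          refine (Finset.card_erase_le).trans ?_
          simp
        exact_mod_cast this
    refine Finset.mem_image.2 ⟨Function.update κ i₀.castSucc (κ i₀.castSucc - ⌊g κ⌋), ?_, ?_⟩
    · refine Fintype.mem_piFinset.2 fun j => ?_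
      by_cases hj : j = i₀.castSucc
      · subst hj
        simp only [hI, if_true, Function.update_self, Finset.mem_Icc]
        have h1 := abs_le.1 hclose
        have h2 := Int.floor_le (z i₀.castSucc / r)
        have h3 := Int.lt_floor_add_one (z i₀.castSucc / r)
        have h4 := Int.floor_le (g κ)
        have h5 := Int.lt_floor_add_one (g κ)
        have h6 : κ i₀.castSucc = ⌊z i₀.castSucc / r⌋ := rfl
        rw [h6]
        constructor
        · have : (-(n + 1) : ℝ) ≤ (⌊z i₀.castSucc / r⌋ : ℝ) - ⌊g κ⌋ := by linarith
          exact_mod_cast this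
        · have : (⌊z i₀.castSucc / r⌋ : ℝ) - ⌊g κ⌋ ≤ n + 1 := by linarith
          exact_mod_cast this
      · simp only [hI, if_neg hj, Function.update_of_ne hj]
        exact floor_mem_Icc_floor hr (hbox j).1 (hbox j).2
    · rw [hgκ]
      simp
  · refine le_trans (Nat.cast_le.2 Finset.card_image_le) ?_
    rw [Fintype.card_piFinset, ← Finset.mul_prod_erase _ _ (Finset.mem_univ i₀.castSucc)]
    push_cast
    refine mul_le_mul ?_ ?_ (Finset.prod_nonneg fun _ _ => Nat.cast_nonneg _) (by positivity)
    · simp only [hI, if_true, Int.card_Icc]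
      have : ((n : ℤ) + 1 + 1 - -(n + 1)).toNat = 2 * n + 3 := by omega
      rw [this]
      push_cast
      exact le_rfl
    · have hc : (Finset.univ.erase i₀.castSucc).card = n := by simp
      calc ∏ j ∈ Finset.univ.erase i₀.castSucc, ((I j).card : ℝ)
          ≤ ∏ _j ∈ Finset.univ.erase i₀.castSucc, (4 * (ℓ / r)) := by
            refine Finset.prod_le_prod (fun _ _ => by positivity) fun j hj => ?_
            simp only [hI, if_neg (Finset.mem_erase.1 hj).1]
            refine (card_Icc_floor_le hr (by linarith)).trans ?_
            have : 2 * ℓ / r = 2 * (ℓ / r) := by ring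
            rw [this]; linarith
        _ = (4 * (ℓ / r)) ^ n := by rw [Finset.prod_const, hc]

/-! ### The upper bound `n` for the dimension when `t ≥ (n + 1) / n` -/

lemma mem_Fset_iff {t : ℝ} {n : ℕ} {z : EuclideanSpace ℝ (Fin (n + 1))} :
    z ∈ Fset t (n + 1) ↔
      (∃ q : ℕ, ∃ p : Fin n → ℕ, (∀ i, 1 ≤ p i ∧ p i < q) ∧
        (∀ i : Fin n, z i.castSucc = (p i : ℝ) / (q : ℝ)) ∧ z (Fin.last n) = (q : ℝ) ^ (-t)) ∨
      ((∀ i : Fin n, z i.castSucc ∈ Set.Icc (0 : ℝ) 1) ∧ z (Fin.last n) = 0) := by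
  have hlast : ∀ w : ℝ, (∀ j : Fin (n + 1), (j : ℕ) = n + 1 - 1 → z j = w) ↔ z (Fin.last n) = w :=
    fun w => ⟨fun h => h _ (by simp), fun h j hj => by
      have : j = Fin.last n := Fin.ext (by simpa using hj)
      rw [this, h]⟩
  constructor
  · rintro (⟨q, p, h1, h2, h3⟩ | ⟨h1, h2⟩)
    · exact Or.inl ⟨q, p, h1, h2, (hlast _).1 h3⟩
    · exact Or.inr ⟨h1, (hlast _).1 h2⟩
  · rintro (⟨q, p, h1, h2, h3⟩ | ⟨h1, h2⟩)
    · exact Or.inl ⟨q, p, h1, h2, (hlast _).2 h3⟩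
    · exact Or.inr ⟨h1, (hlast _).2 h2⟩

/-- The part of `F` above a cube of side `2R` and between the heights `y` and `y + 2ℓ`, where
`ℓ ≤ y`. Over each subcube of side comparable to `ℓ` this part is contained in a vertical
hyperplane, because a denominator `q` with `q ^ (-t) ≥ ℓ` satisfies `q ^ (n + 1) ≤ ℓ⁻ⁿ`. -/
lemma cellsLE_layer {n : ℕ} (hn : 1 ≤ n) {t : ℝ} (ht : (n : ℝ) + 1 ≤ t * n) :
    ∃ C : ℝ, 0 < C ∧ ∀ (x : EuclideanSpace ℝ (Fin (n + 1))) (r R ℓ y : ℝ), 0 < r → r ≤ ℓ → ℓ ≤ y →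
      ℓ ≤ 3 * R → CellsLE r {z | z ∈ Fset t (n + 1) ∧
        (∀ i : Fin n, |z i.castSucc - x i.castSucc| ≤ R) ∧
        y ≤ z (Fin.last n) ∧ z (Fin.last n) ≤ y + 2 * ℓ} (C * (R / r) ^ n) := by
  classical
  have hfac : (1 : ℝ) ≤ (n + 1).factorial := by
    exact_mod_cast Nat.succ_le_of_lt (Nat.factorial_pos _)
  set K : ℝ := 4 * (n + 1).factorial + 6 with hK
  refine ⟨K ^ n * ((2 * n + 3) * 4 ^ n), by positivity, ?_⟩
  intro x r R ℓ y hr hrℓ hℓy hℓR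
  have hℓ : 0 < ℓ := hr.trans_le hrℓ
  have hR : 0 < R := by linarith
  set ρ : ℝ := ℓ / (2 * (n + 1).factorial) with hρ
  have hρ0 : 0 < ρ := by positivity
  have hρℓ : ρ ≤ ℓ := div_le_self hℓ.le (by linarith)
  set I : Finset (Fin n → ℤ) := Fintype.piFinset fun i : Fin n =>
    Finset.Icc ⌊(x i.castSucc - R) / ρ⌋ ⌊(x i.castSucc - R + 2 * R) / ρ⌋ with hI
  have hIcard : (I.card : ℝ) ≤ (K * (R / ℓ)) ^ n := by
    rw [hI, Fintype.card_piFinset]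
    push_cast
    refine (Finset.prod_le_prod (fun _ _ => by positivity)
      fun i _ => card_Icc_floor_le hρ0 (by linarith)).trans ?_
    rw [Finset.prod_const, Finset.card_univ, Fintype.card_fin]
    have h1 : 2 * R / ρ = 4 * (n + 1).factorial * (R / ℓ) := by
      rw [hρ]; field_simp; ring
    have h2 : 1 ≤ 3 * (R / ℓ) := by
      rw [← mul_div_assoc, le_div_iff₀ hℓ]; linarith
    rw [h1, hK, add_mul]
    gcongr
    linarith
  set S : (Fin n → ℤ) → Set (EuclideanSpace ℝ (Fin (n + 1))) := fun m =>
    {z | z ∈ Fset t (n + 1) ∧ (∀ i : Fin n, m i * ρ ≤ z i.castSucc ∧ z i.castSucc ≤ m i * ρ + ρ) ∧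
        y ≤ z (Fin.last n) ∧ z (Fin.last n) ≤ y + 2 * ℓ} with hS
  have hpiece : ∀ m ∈ I, CellsLE r (S m) ((2 * n + 3) * (4 * (ℓ / r)) ^ n) := by
    intro m _
    obtain ⟨i₀, a, b, ha₀, ha, hab⟩ := exists_hyperplane hn hℓ hρ (fun i => m i * ρ)
      ((fun z : EuclideanSpace ℝ (Fin (n + 1)) => fun i : Fin n => z i.castSucc) '' S m) (by
        rintro _ ⟨z, ⟨hzF, hzm, hzy, -⟩, rfl⟩
        refine ⟨fun i => ?_, ?_⟩
        · have := hzm i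
          rw [abs_le]; constructor <;> linarith
        · rcases mem_Fset_iff.1 hzF with ⟨q, p, hpq, hz, hzl⟩ | ⟨-, h0⟩
          · have hq : 1 ≤ q := by have := hpq ⟨0, hn⟩; omega
            have hq' : (1 : ℝ) ≤ q := by exact_mod_cast hq
            refine ⟨q, p, hq, ?_, hz⟩
            have h1 : ℓ ^ n ≤ ((q : ℝ) ^ (-t)) ^ n := by
              rw [← hzl]; gcongr; linarith
            calc (q : ℝ) ^ (n + 1) * ℓ ^ n ≤ (q : ℝ) ^ (n + 1) * ((q : ℝ) ^ (-t)) ^ n := by gcongr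
              _ = (q : ℝ) ^ (((n : ℝ) + 1) + (-t) * n) := by
                rw [Real.rpow_add (by linarith), Real.rpow_mul (by linarith), Real.rpow_natCast,
                  ← Nat.cast_succ, Real.rpow_natCast]
              _ ≤ 1 := Real.rpow_le_one_of_one_le_of_nonpos hq' (by linarith)
          · linarith)
    refine cellsLE_hyperplane hr hrℓ i₀ a b ha₀ ha (Fin.snoc (fun i => m i * ρ) y) _ ?_
    intro z hz
    refine ⟨fun j => ?_, hab _ ⟨z, hz, rfl⟩⟩
    obtain ⟨-, hzm, hzy⟩ := hz
    refine Fin.lastCases ?_ (fun i => ?_) j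
    · simpa using hzy
    · have := hzm i
      simp only [Fin.snoc_castSucc]
      constructor <;> linarith
  refine (CellsLE.biUnion I hpiece).mono ?_ ?_
  · rintro z ⟨hzF, hzR, hzy⟩
    refine mem_iUnion₂.2 ⟨fun i => ⌊z i.castSucc / ρ⌋, ?_, hzF, fun i => ?_, hzy⟩
    · refine Fintype.mem_piFinset.2 fun i => ?_
      have := abs_le.1 (hzR i)
      exact floor_mem_Icc_floor hρ0 (by linarith) (by linarith)
    · have h1 := Int.floor_le (z i.castSucc / ρ)
      have h2 := (Int.lt_floor_add_one (z i.castSucc / ρ)).le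
      rw [le_div_iff₀ hρ0] at h1
      rw [div_le_iff₀ hρ0] at h2
      constructor <;> linarith
  · calc (I.card : ℝ) * ((2 * n + 3) * (4 * (ℓ / r)) ^ n)
        ≤ (K * (R / ℓ)) ^ n * ((2 * n + 3) * (4 * (ℓ / r)) ^ n) := by gcongr
      _ = K ^ n * ((2 * n + 3) * 4 ^ n) * (R / ℓ * (ℓ / r)) ^ n := by
        simp only [mul_pow]; ring
      _ = K ^ n * ((2 * n + 3) * 4 ^ n) * (R / r) ^ n := by
        rw [div_mul_div_cancel₀ hℓ.ne']

/-- There are about `log (R / r)` dyadic layers between the heights `r` and `3R`; the loss of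
this factor is harmless for the dimension. -/
lemma add_mem_assouadExp_Fset {n : ℕ} (hn : 1 ≤ n) {t : ℝ} (ht : (n : ℝ) + 1 ≤ t * n) {ε : ℝ}
    (hε : 0 < ε) : (n : ℝ) + ε ∈ assouadExp (n + 1) (Fset t (n + 1)) := by
  obtain ⟨C, hC, hlayer⟩ := cellsLE_layer hn ht
  refine ⟨3 * 4 ^ n + (5 + 2 / ε) * C, by positivity, fun x hx r R hr hR => ?_⟩
  refine cubeCoverNum_le_of_cells hr ?_
  have hR0 : 0 < R := hr.trans hR
  set u : ℝ := R / r with hu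
  have hu1 : 1 ≤ u := by rw [hu, le_div_iff₀ hr]; linarith
  have hu0 : 0 < u := by linarith
  have huε : 1 ≤ u ^ ε := Real.one_le_rpow hu1 hε.le
  rw [Real.rpow_add hu0, Real.rpow_natCast]
  have hFnonneg : ∀ z ∈ Fset t (n + 1), 0 ≤ z (Fin.last n) := by
    intro z hz
    rcases mem_Fset_iff.1 hz with ⟨q, p, -, -, h⟩ | ⟨-, h⟩
    · rw [h]; positivity
    · rw [h]
  rcases le_or_gt (x (Fin.last n)) (2 * R) with hlow | hhigh
  -- the ball may reach the floor: a bottom slab of height `r`, then dyadic layers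
  · set J : ℕ := ⌊Real.logb 2 (3 * u)⌋₊ + 1 with hJ
    have hJle : (J : ℝ) ≤ (5 + 2 / ε) * u ^ ε := by
      have h1 : Real.log (3 * u) ≤ 2 + u ^ ε / ε := by
        rw [Real.log_mul (by norm_num) hu0.ne']
        have := Real.log_le_rpow_div hu0.le hε
        have := Real.log_le_sub_one_of_pos (show (0 : ℝ) < 3 by norm_num)
        linarith
      have h2 : Real.logb 2 (3 * u) ≤ 2 * (2 + u ^ ε / ε) := by
        have hlog2 : (1 : ℝ) / 2 ≤ Real.log 2 := by linarith [Real.log_two_gt_d9]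
        have h0 : 0 ≤ 2 + u ^ ε / ε := by positivity
        rw [Real.logb, div_le_iff₀ (by linarith)]
        nlinarith
      have h3 : (⌊Real.logb 2 (3 * u)⌋₊ : ℝ) ≤ Real.logb 2 (3 * u) :=
        Nat.floor_le (Real.logb_nonneg (by norm_num) (by linarith))
      rw [hJ]
      push_cast
      have h4 : (5 + 2 / ε) * u ^ ε = 5 * u ^ ε + 2 * (u ^ ε / ε) := by ring
      linarith
    have hbot := cellsLE_box (k := n + 1) hr (Fin.snoc (fun i => x i.castSucc - R) 0)
      (Fin.snoc (fun _ => 2 * R) r) (by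
        intro j; refine Fin.lastCases ?_ (fun i => ?_) j
        · simpa using hr.le
        · simpa using hR0.le)
    rw [Fin.prod_univ_castSucc] at hbot
    simp only [Fin.snoc_castSucc, Fin.snoc_last, Finset.prod_const, Finset.card_univ,
      Fintype.card_fin, div_self hr.ne'] at hbot
    have htop := CellsLE.biUnion (Finset.range J) (r := r)
      (S := fun j => {z | z ∈ Fset t (n + 1) ∧ (∀ i : Fin n, |z i.castSucc - x i.castSucc| ≤ R) ∧
        (2 ^ j * r ≤ 3 * R ∧ 2 ^ j * r ≤ z (Fin.last n)) ∧
        z (Fin.last n) ≤ 2 ^ j * r + 2 * (2 ^ j * r)}) (N := C * u ^ n) (by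
        intro j _
        have h1 : (1 : ℝ) ≤ 2 ^ j := one_le_pow₀ (by norm_num)
        by_cases hj : 2 ^ j * r ≤ 3 * R
        · refine (hlayer x r R (2 ^ j * r) (2 ^ j * r) hr (by nlinarith) le_rfl hj).mono ?_ le_rfl
          rintro z ⟨a, b, c, d⟩
          exact ⟨a, b, c.2, d⟩
        · refine ⟨∅, fun z hz => absurd hz.2.2.1.1 hj, ?_⟩
          simp only [Finset.card_empty, Nat.cast_zero]
          positivity)
    refine (hbot.union htop).mono ?_ ?_
    · rintro z ⟨hzB, hzF⟩
      have hzc := abs_coord_sub_le hzB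
      rcases lt_or_ge (z (Fin.last n)) r with hz | hz
      · left
        intro j
        refine Fin.lastCases ?_ (fun i => ?_) j
        · simpa using ⟨hFnonneg z hzF, hz.le⟩
        · have := abs_le.1 (hzc i.castSucc)
          simp only [Fin.snoc_castSucc]
          constructor <;> linarith
      · right
        obtain ⟨j, hj1, hj2⟩ := exists_nat_pow_near (x := z (Fin.last n) / r) (y := (2 : ℝ))
          ((one_le_div hr).2 hz) (by norm_num)
        rw [le_div_iff₀ hr] at hj1
        rw [div_lt_iff₀ hr, pow_succ] at hj2
        have h3 : z (Fin.last n) ≤ 3 * R := by linarith [(abs_le.1 (hzc (Fin.last n))).2]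
        refine mem_iUnion₂.2 ⟨j, ?_, hzF, fun i => hzc _, ⟨hj1.trans h3, hj1⟩, ?_⟩
        · rw [Finset.mem_range, hJ, Nat.lt_succ_iff]
          refine Nat.le_floor ?_
          rw [Real.le_logb_iff_rpow_le (by norm_num) (by positivity), Real.rpow_natCast, hu,
            ← mul_div_assoc, le_div_iff₀ hr]
          exact hj1.trans h3
        · have : 0 ≤ 2 ^ j * r := by positivity
          linarith
    · rw [Finset.card_range]
      have h1 : 2 * R / r + 2 ≤ 4 * u := by
        have : 2 * R / r = 2 * u := by rw [hu]; ring
        linarith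
      calc (2 * R / r + 2) ^ n * (1 + 2) + J * (C * u ^ n)
          ≤ (4 * u) ^ n * (1 + 2) * u ^ ε + (5 + 2 / ε) * u ^ ε * (C * u ^ n) := by
            have h2 : (2 * R / r + 2) ^ n * (1 + 2) ≤ (4 * u) ^ n * (1 + 2) * u ^ ε :=
              calc (2 * R / r + 2) ^ n * (1 + 2) ≤ (4 * u) ^ n * (1 + 2) := by gcongr
                _ ≤ _ := le_mul_of_one_le_right (by positivity) huε
            gcongr
        _ = _ := by rw [mul_pow]; ring
  · refine (hlayer x r R R (x (Fin.last n) - R) hr hR.le (by linarith) (by linarith)).mono ?_ ?_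
    · rintro z ⟨hzB, hzF⟩
      have hzc := abs_coord_sub_le hzB
      have := abs_le.1 (hzc (Fin.last n))
      exact ⟨hzF, fun i => hzc _, by linarith, by linarith⟩
    · have h0 : 0 < 2 / ε := by positivity
      calc C * u ^ n ≤ (C * u ^ n) * u ^ ε := le_mul_of_one_le_right (by positivity) huε
        _ ≤ (3 * 4 ^ n + (5 + 2 / ε) * C) * (u ^ n * u ^ ε) := by
          rw [mul_assoc]
          gcongr
          have h4 : (0 : ℝ) < 4 ^ n := by positivity
          nlinarith

/-! ### Points of the graph, and the lower bound `n` -/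

lemma mem_Gset_iff {t : ℝ} {n : ℕ} {z : EuclideanSpace ℝ (Fin (n + 1))} :
    z ∈ Gset t (n + 1) ↔ (∀ i : Fin n, z i.castSucc ∈ Set.Icc (0 : ℝ) 1) ∧
      z (Fin.last n) = popcornFun t (n + 1) (fun i : Fin n => z i.castSucc) := by
  constructor
  · rintro ⟨x, h1, h2, h3⟩
    have hx : x = fun i : Fin n => z i.castSucc := funext fun i => (h2 i).symm
    subst hx
    exact ⟨h1, h3 _ (by simp)⟩
  · rintro ⟨h1, h2⟩
    refine ⟨fun i : Fin n => z i.castSucc, h1, fun i => rfl, fun j hj => ?_⟩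
    have : j = Fin.last n := Fin.ext (by simpa using hj)
    rw [this, h2]

lemma Gset_subset_Fset {t : ℝ} {n : ℕ} : Gset t (n + 1) ⊆ Fset t (n + 1) := by
  intro z hz
  obtain ⟨h1, h2⟩ := mem_Gset_iff.1 hz
  rw [mem_Fset_iff]
  rw [popcornFun] at h2
  split_ifs at h2 with h
  · obtain ⟨p, hp, hx⟩ := h.choose_spec
    exact Or.inl ⟨h.choose, p, fun i => ⟨(hp i).1, (hp i).2.1⟩, hx, h2⟩
  · exact Or.inr ⟨h1, h2⟩

/-- The denominator of a reduced fraction is unique, so the choice made in the definition of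
`popcornFun` is forced. -/
lemma popcornFun_div {t : ℝ} {n : ℕ} (hn : 1 ≤ n) {q : ℕ} {p : Fin n → ℕ}
    (hp : ∀ i, 1 ≤ p i ∧ p i < q ∧ Nat.Coprime (p i) q) {x : Fin n → ℝ}
    (hx : ∀ i, x i = (p i : ℝ) / (q : ℝ)) : popcornFun t (n + 1) x = (q : ℝ) ^ (-t) := by
  have h : ∃ q : ℕ, ∃ p : Fin (n + 1 - 1) → ℕ,
      (∀ i, 1 ≤ p i ∧ p i < q ∧ Nat.Coprime (p i) q) ∧
      (∀ i : Fin (n + 1 - 1), x i = (p i : ℝ) / (q : ℝ)) := ⟨q, p, hp, hx⟩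
  rw [popcornFun, dif_pos h]
  obtain ⟨p', hp', hx'⟩ := h.choose_spec
  set q' := h.choose
  obtain ⟨a1, a2, a3⟩ := hp ⟨0, hn⟩
  obtain ⟨b1, b2, b3⟩ := hp' ⟨0, hn⟩
  have e := (hx ⟨0, hn⟩).symm.trans (hx' ⟨0, hn⟩)
  have hq : (q : ℝ) ≠ 0 := by have : 0 < q := by omega
                              positivity
  have hq' : (q' : ℝ) ≠ 0 := by have : 0 < q' := by omega
                                positivity
  rw [div_eq_div_iff hq hq'] at e
  have e' : p ⟨0, hn⟩ * q' = p' ⟨0, hn⟩ * q := by exact_mod_cast e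
  have d1 : q ∣ q' := a3.symm.dvd_of_dvd_mul_left ⟨p' ⟨0, hn⟩, by rw [e', mul_comm]⟩
  have d2 : q' ∣ q := b3.symm.dvd_of_dvd_mul_left ⟨p ⟨0, hn⟩, by rw [← e', mul_comm]⟩
  rw [Nat.dvd_antisymm d1 d2]

lemma popcornFun_irrational {t : ℝ} {n : ℕ} {x : Fin n → ℝ} (i : Fin n) (hx : Irrational (x i)) :
    popcornFun t (n + 1) x = 0 := by
  rw [popcornFun, dif_neg]
  rintro ⟨q, p, -, h⟩
  exact hx ⟨(p i : ℚ) / q, by rw [h i]; push_cast; rfl⟩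

lemma mem_closedBall_of_abs_le {k : ℕ} {x z : EuclideanSpace ℝ (Fin k)} {w : ℝ} (hw : 0 ≤ w)
    (h : ∀ j, |z j - x j| ≤ w) : z ∈ Metric.closedBall x (k * w) := by
  rw [Metric.mem_closedBall, EuclideanSpace.dist_eq]
  refine Real.sqrt_le_iff.2 ⟨by positivity, ?_⟩
  have h1 : ∑ j, dist (z j) (x j) ^ 2 ≤ ∑ _j : Fin k, w ^ 2 :=
    Finset.sum_le_sum fun j _ => by
      rw [Real.dist_eq]
      have := h j
      gcongr
  refine h1.trans ?_
  rw [Finset.sum_const, Finset.card_univ, Fintype.card_fin, nsmul_eq_mul, mul_pow]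
  gcongr
  have : (k : ℝ) ≤ (k : ℝ) ^ 2 := by exact_mod_cast Nat.le_self_pow (by norm_num) k
  exact this

/-- The graph contains many points of the floor, namely those with irrational coordinates. -/
lemma le_of_mem_assouadExp_Gset {n : ℕ} (hn : 1 ≤ n) {t α : ℝ}
    (hα : α ∈ assouadExp (n + 1) (Gset t (n + 1))) : (n : ℝ) ≤ α := by
  classical
  refine le_of_mem_assouadExp (c := 1) (K := n + 2) hα one_pos (by linarith [n.cast_nonneg (α := ℝ)]) ?_
  intro m hm
  have hm0 : (0 : ℝ) < m := by exact_mod_cast hm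
  have hs0 : 0 < √2 / 2 := by positivity
  have hs1 : √2 / 2 < 1 := by
    have : √2 < 2 := by rw [Real.sqrt_lt' (by norm_num)]; norm_num
    linarith
  have hirr : Irrational (√2 / 2) := by
    simpa using irrational_sqrt_two.div_natCast (m := 2) (by norm_num)
  set pt : (Fin n → Fin m) → EuclideanSpace ℝ (Fin (n + 1)) := fun k =>
    WithLp.toLp 2 (Fin.snoc (fun i => (((k i : ℕ) : ℝ) + √2 / 2) / m) 0) with hpt
  have hcoord : ∀ k i, pt k (Fin.castSucc i) = (((k i : ℕ) : ℝ) + √2 / 2) / m := by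
    intro k i; simp [hpt]
  have hlast : ∀ k, pt k (Fin.last n) = 0 := by intro k; simp [hpt]
  have h01 : ∀ k j, pt k j ∈ Set.Icc (0 : ℝ) 1 := by
    intro k j
    refine Fin.lastCases ?_ (fun i => ?_) j
    · rw [hlast]; simp
    · rw [hcoord]
      refine ⟨by positivity, ?_⟩
      rw [div_le_one hm0]
      have : ((k i : ℕ) : ℝ) + 1 ≤ m := by exact_mod_cast (k i).2
      linarith
  have hmem : ∀ k, pt k ∈ Gset t (n + 1) := by
    intro k
    refine mem_Gset_iff.2 ⟨fun i => h01 k _, ?_⟩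
    rw [hlast, popcornFun_irrational (⟨0, hn⟩ : Fin n)]
    rw [hcoord]
    exact (hirr.natCast_add _).div_natCast (by omega)
  refine ⟨pt fun _ => ⟨0, hm⟩, hmem _, 1 / m, by positivity,
    Finset.univ.image fun k => (gridCell (1 / (m : ℝ)) (pt k)), ?_, ?_⟩
  · intro κ hκ
    obtain ⟨k, -, rfl⟩ := Finset.mem_image.1 hκ
    refine ⟨pt k, ⟨?_, hmem k⟩, rfl⟩
    refine Metric.closedBall_subset_closedBall ?_
      (mem_closedBall_of_abs_le (w := 1) zero_le_one fun j => ?_)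
    · push_cast
      rw [mul_assoc, mul_one_div_cancel hm0.ne']
      linarith
    · have h1 := h01 k j
      have h2 := h01 (fun _ => ⟨0, hm⟩) j
      rw [abs_le]; constructor <;> linarith [h1.1, h1.2, h2.1, h2.2]
  · rw [Finset.card_image_of_injective]
    · simp
    · intro k k' h
      funext i
      have e := congrFun h i.castSucc
      have hfl : ∀ k : Fin n → Fin m, gridCell (1 / (m : ℝ)) (pt k) i.castSucc = ((k i : ℕ) : ℤ) := by
        intro k
        simp only [gridCell, hcoord]
        rw [div_div, mul_one_div_cancel hm0.ne', div_one, Int.floor_eq_iff]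
        push_cast
        constructor <;> linarith
      beta_reduce at e
      rw [hfl, hfl] at e
      exact Fin.ext (by exact_mod_cast e)

/-! ### Integers with large totient -/

lemma one_sub_sum_le_prod {ι : Type*} (s : Finset ι) (f : ι → ℝ) (h0 : ∀ i ∈ s, 0 ≤ f i)
    (h1 : ∀ i ∈ s, f i ≤ 1) : 1 - ∑ i ∈ s, f i ≤ ∏ i ∈ s, (1 - f i) := by
  classical
  induction s using Finset.induction_on with
  | empty => simp
  | insert a s ha ih =>
    rw [Finset.sum_insert ha, Finset.prod_insert ha]
    have ih' := ih (fun i hi => h0 i (Finset.mem_insert_of_mem hi))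
      (fun i hi => h1 i (Finset.mem_insert_of_mem hi))
    have ha0 := h0 a (Finset.mem_insert_self _ _)
    have ha1 := h1 a (Finset.mem_insert_self _ _)
    have hs : 0 ≤ ∑ i ∈ s, f i := Finset.sum_nonneg fun i hi => h0 i (Finset.mem_insert_of_mem hi)
    have := mul_le_mul_of_nonneg_left ih' (sub_nonneg.2 ha1)
    nlinarith

lemma one_sub_sum_le_totient_div {q M : ℕ} (hq : 0 < q) (hqM : q ≤ M) :
    1 - ∑ k ∈ (Finset.Icc 2 M).filter (· ∣ q), (1 : ℝ) / k ≤ (q.totient : ℝ) / q := by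
  have hq' : (0 : ℝ) < q := by exact_mod_cast hq
  have h1 : (q.totient : ℝ) / q = ∏ p ∈ q.primeFactors, (1 - (1 : ℝ) / p) := by
    have := Nat.totient_eq_mul_prod_factors q
    have h : ((q.totient : ℚ) : ℝ) = ((q * ∏ p ∈ q.primeFactors, (1 - (p : ℚ)⁻¹) : ℚ) : ℝ) := by
      rw [this]
    push_cast at h
    rw [h, mul_div_cancel_left₀ _ hq'.ne']
    simp
  rw [h1]
  refine le_trans ?_ (one_sub_sum_le_prod _ _ (fun p _ => by positivity) fun p hp => ?_)
  · refine sub_le_sub_left (Finset.sum_le_sum_of_subset_of_nonneg ?_ fun _ _ _ => by positivity) _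
    intro p hp
    have hpp := Nat.prime_of_mem_primeFactors hp
    have hpd := Nat.dvd_of_mem_primeFactors hp
    exact Finset.mem_filter.2 ⟨Finset.mem_Icc.2 ⟨hpp.two_le, (Nat.le_of_dvd hq hpd).trans hqM⟩, hpd⟩
  · have : (1 : ℝ) ≤ p := by exact_mod_cast (Nat.prime_of_mem_primeFactors hp).one_lt.le
    exact div_le_one_of_le₀ this (by positivity)

lemma sum_one_div_sq_le (M : ℕ) : ∑ k ∈ Finset.Icc 2 M, (1 : ℝ) / (k : ℝ) ^ 2 ≤ 3 / 4 := by
  have key : ∀ M : ℕ, 2 ≤ M → ∑ k ∈ Finset.Icc 2 M, (1 : ℝ) / (k : ℝ) ^ 2 ≤ 3 / 4 - 1 / M := by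
    intro M hM
    induction M, hM using Nat.le_induction with
    | base => norm_num
    | succ M hM ih =>
      rw [Finset.sum_Icc_succ_top (by omega)]
      have h0 : (0 : ℝ) < M := by
        have : 0 < M := by omega
        exact_mod_cast this
      have : (1 : ℝ) / ((M + 1 : ℕ) : ℝ) ^ 2 ≤ 1 / M - 1 / ((M + 1 : ℕ) : ℝ) := by
        push_cast
        rw [div_sub_div _ _ h0.ne' (by positivity), div_le_div_iff₀ (by positivity) (by positivity)]
        nlinarith
      linarith
  rcases lt_or_ge M 2 with h | h
  · rw [Finset.Icc_eq_empty (by omega)]; norm_num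
  · have := key M h
    have h1 : (0 : ℝ) ≤ 1 / M := by positivity
    linarith

lemma card_multiples_le (M₀ M₁ : ℕ) (h : M₀ ≤ M₁) {k : ℕ} (hk : 0 < k) :
    (((Finset.Ioc M₀ M₁).filter (k ∣ ·)).card : ℝ) ≤ ((M₁ : ℝ) - M₀) / k + 1 := by
  have h1 := Nat.Ioc_filter_modEq_card M₀ M₁ hk 0
  have h2 : (Finset.Ioc M₀ M₁).filter (k ∣ ·) = (Finset.Ioc M₀ M₁).filter (· ≡ 0 [MOD k]) :=
    Finset.filter_congr fun x _ => (Nat.modEq_zero_iff_dvd).symm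
  rw [h2]
  have hk' : (0 : ℚ) < k := by exact_mod_cast hk
  have h3 : ((((Finset.Ioc M₀ M₁).filter (· ≡ 0 [MOD k])).card : ℤ) : ℚ)
      ≤ ((M₁ : ℚ) - M₀) / k + 1 := by
    rw [h1]
    push_cast
    simp only [sub_zero]
    refine max_le ?_ ?_
    · have a := Int.floor_le ((M₁ : ℚ) / k)
      have b := Int.lt_floor_add_one ((M₀ : ℚ) / k)
      rw [sub_div]; linarith
    · have : (0 : ℚ) ≤ (M₁ : ℚ) - M₀ := sub_nonneg.2 (by exact_mod_cast h)
      positivity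
  have h4 := (Rat.cast_le (K := ℝ)).2 h3
  push_cast at h4
  exact h4

/-- The average over `q` of `∑ 1 / k`, over the divisors `k ≥ 2` of `q`, is at most
`∑ 1 / k ^ 2 ≤ 3 / 4` up to a logarithmic error, so `φ(q) / q` is at least `1 / 4` on average. -/
lemma sum_totient_div_ge (M₀ M₁ : ℕ) (h : M₀ ≤ M₁) :
    ((M₁ : ℝ) - M₀) / 4 - (1 + Real.log M₁) ≤ ∑ q ∈ Finset.Ioc M₀ M₁, (q.totient : ℝ) / q := by
  have hL : (0 : ℝ) ≤ (M₁ : ℝ) - M₀ := sub_nonneg.2 (by exact_mod_cast h)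
  have h1 : ∑ q ∈ Finset.Ioc M₀ M₁, (1 - ∑ k ∈ (Finset.Icc 2 M₁).filter (· ∣ q), (1 : ℝ) / k)
      ≤ ∑ q ∈ Finset.Ioc M₀ M₁, (q.totient : ℝ) / q := by
    refine Finset.sum_le_sum fun q hq => ?_
    rw [Finset.mem_Ioc] at hq
    exact one_sub_sum_le_totient_div (by omega) hq.2
  refine le_trans ?_ h1
  rw [Finset.sum_sub_distrib, Finset.sum_const, Nat.card_Ioc, nsmul_eq_mul, mul_one,
    Nat.cast_sub h]
  have h2 : ∑ q ∈ Finset.Ioc M₀ M₁, ∑ k ∈ (Finset.Icc 2 M₁).filter (· ∣ q), (1 : ℝ) / k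
      = ∑ k ∈ Finset.Icc 2 M₁, (((Finset.Ioc M₀ M₁).filter (k ∣ ·)).card : ℝ) * (1 / k) := by
    simp_rw [Finset.sum_filter]
    rw [Finset.sum_comm]
    refine Finset.sum_congr rfl fun k _ => ?_
    rw [← Finset.sum_filter, Finset.sum_const, nsmul_eq_mul]
  have h3 : ∑ k ∈ Finset.Icc 2 M₁, (((Finset.Ioc M₀ M₁).filter (k ∣ ·)).card : ℝ) * (1 / k)
      ≤ ∑ k ∈ Finset.Icc 2 M₁, (((M₁ : ℝ) - M₀) * (1 / (k : ℝ) ^ 2) + 1 / k) := by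
    refine Finset.sum_le_sum fun k hk => ?_
    have hk2 := (Finset.mem_Icc.1 hk).1
    have hk0 : (0 : ℝ) < k := by
      have : 0 < k := by omega
      exact_mod_cast this
    refine (mul_le_mul_of_nonneg_right (card_multiples_le M₀ M₁ h (by omega))
      (by positivity)).trans (le_of_eq ?_)
    field_simp
  have h4 : ∑ k ∈ Finset.Icc 2 M₁, (1 : ℝ) / k ≤ 1 + Real.log M₁ := by
    have a := harmonic_le_one_add_log M₁
    rw [harmonic_eq_sum_Icc] at a
    push_cast at a
    refine le_trans ?_ a
    simp_rw [one_div]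
    exact Finset.sum_le_sum_of_subset_of_nonneg (Finset.Icc_subset_Icc (by norm_num) le_rfl)
      fun _ _ _ => by positivity
  rw [Finset.sum_add_distrib, ← Finset.mul_sum] at h3
  have h5 := mul_le_mul_of_nonneg_left (sum_one_div_sq_le M₁) hL
  rw [h2]
  linarith

/-- The integers in `(a Z, b Z]` whose totient is at least a sixteenth of them. -/
noncomputable def richDenoms (a b Z : ℝ) : Finset ℕ :=
  (Finset.Ioc ⌊a * Z⌋₊ ⌊b * Z⌋₊).filter fun q => (q : ℝ) ≤ 16 * q.totient

lemma eventually_le_card_richDenoms {a b : ℝ} (ha : 0 ≤ a) (hab : a < b) :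
    ∀ᶠ Z : ℝ in atTop, (b - a) / 32 * Z ≤ (richDenoms a b Z).card := by
  have hb : 0 < b := ha.trans_lt hab
  set δ : ℝ := (b - a) / 32 with hδ
  have hδ0 : 0 < δ := by rw [hδ]; linarith
  have hlog : ∀ᶠ Z : ℝ in atTop, Real.log Z ≤ δ * Z := by
    filter_upwards [Real.isLittleO_log_id_atTop.bound hδ0, eventually_ge_atTop 0] with Z hZ hZ0
    have := (le_abs_self _).trans hZ
    simpa [abs_of_nonneg hZ0] using this
  filter_upwards [hlog, eventually_gt_atTop 0, eventually_ge_atTop ((2 + Real.log b) / δ),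
    eventually_ge_atTop (1 / b)] with Z h1 h2 h3 h4
  rw [div_le_iff₀ hδ0] at h3
  rw [div_le_iff₀ hb] at h4
  set M₀ := ⌊a * Z⌋₊ with hM₀
  set M₁ := ⌊b * Z⌋₊ with hM₁
  have hM : M₀ ≤ M₁ := Nat.floor_le_floor (by gcongr)
  have hM₁0 : 0 < M₁ := Nat.floor_pos.2 (by linarith)
  have e1 : (M₀ : ℝ) ≤ a * Z := Nat.floor_le (by positivity)
  have e2 : b * Z < M₁ + 1 := Nat.lt_floor_add_one _
  have e3 : (M₁ : ℝ) ≤ b * Z := Nat.floor_le (by positivity)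
  have hlogM : Real.log M₁ ≤ Real.log b + Real.log Z := by
    rw [← Real.log_mul hb.ne' h2.ne']
    exact Real.log_le_log (by exact_mod_cast hM₁0) e3
  have hsum := sum_totient_div_ge M₀ M₁ hM
  have hup : ∑ q ∈ Finset.Ioc M₀ M₁, (q.totient : ℝ) / q
      ≤ (richDenoms a b Z).card + ((M₁ : ℝ) - M₀) / 16 := by
    have : ∀ q ∈ Finset.Ioc M₀ M₁, (q.totient : ℝ) / q
        ≤ (if (q : ℝ) ≤ 16 * q.totient then (1 : ℝ) else 0) + 1 / 16 := by
      intro q hq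
      have hq0 : (0 : ℝ) < q := by
        have : 0 < q := by have := (Finset.mem_Ioc.1 hq).1; omega
        exact_mod_cast this
      have hle : (q.totient : ℝ) ≤ q := by exact_mod_cast Nat.totient_le q
      split_ifs with hc
      · rw [div_le_iff₀ hq0]; linarith
      · rw [div_le_iff₀ hq0]; push Not at hc; linarith
    refine (Finset.sum_le_sum this).trans (le_of_eq ?_)
    rw [Finset.sum_add_distrib, ← Finset.sum_filter, Finset.sum_const, Finset.sum_const,
      Nat.card_Ioc, nsmul_eq_mul, nsmul_eq_mul, Nat.cast_sub hM, mul_one]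
    simp only [richDenoms]
    ring
  have hδ' : b * Z - a * Z = 32 * (δ * Z) := by rw [hδ]; ring
  linarith

/-! ### Cells met by reduced fractions: a second moment bound -/

/-- Numerators `p < q` coprime to `q` for which `p / q` lies in the cell `[j / N, (j + 1) / N)`. -/
def cellNums (q N j : ℕ) : Finset ℕ :=
  (Finset.range q).filter fun p => q.Coprime p ∧ p * N / q = j

/-- Pairs of reduced fractions with denominators `q` and `q'` that lie in a common cell of
length `1 / N`. -/
def sameCell (q q' N : ℕ) : Finset (ℕ × ℕ) :=
  (Finset.range q ×ˢ Finset.range q').filter fun u =>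
    q.Coprime u.1 ∧ q'.Coprime u.2 ∧ u.1 * N / q = u.2 * N / q'

lemma mul_div_lt_of_lt {p q N : ℕ} (hN : 0 < N) (h : p < q) : p * N / q < N := by
  rw [Nat.div_lt_iff_lt_mul (by omega), mul_comm N]
  exact Nat.mul_lt_mul_of_pos_right h hN

lemma sum_card_cellNums {q N : ℕ} (hN : 0 < N) :
    ∑ j ∈ Finset.range N, (cellNums q N j).card = q.totient := by
  rw [Nat.totient_eq_card_coprime, Finset.card_eq_sum_card_fiberwise (t := Finset.range N)
    (f := fun p => p * N / q)]
  · refine Finset.sum_congr rfl fun j _ => ?_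
    rw [cellNums, Finset.filter_filter]
  · intro p hp
    simp only [Finset.coe_filter, Finset.mem_range, Set.mem_ofPred_eq] at hp
    simpa using mul_div_lt_of_lt hN hp.1

lemma sum_card_cellNums_mul {q q' N : ℕ} (hN : 0 < N) :
    ∑ j ∈ Finset.range N, (cellNums q N j).card * (cellNums q' N j).card
      = (sameCell q q' N).card := by
  rw [Finset.card_eq_sum_card_fiberwise (s := sameCell q q' N) (t := Finset.range N)
    (f := fun u => u.1 * N / q)]
  · refine Finset.sum_congr rfl fun j _ => ?_
    rw [← Finset.card_product]
    congr 1
    ext ⟨p, p'⟩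
    simp only [cellNums, sameCell, Finset.mem_product, Finset.mem_filter, Finset.mem_range]
    constructor
    · rintro ⟨⟨h1, h2, h3⟩, h4, h5, h6⟩
      exact ⟨⟨⟨h1, h4⟩, h2, h5, h3.trans h6.symm⟩, h3⟩
    · rintro ⟨⟨⟨h1, h4⟩, h2, h5, h3⟩, h6⟩
      exact ⟨⟨h1, h2, h6⟩, h4, h5, h3.symm.trans h6⟩
  · intro u hu
    simp only [sameCell, Finset.coe_filter, Finset.mem_product, Finset.mem_range,
      Set.mem_ofPred_eq] at hu
    simpa using mul_div_lt_of_lt hN hu.1.1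

/-- Fractions in a common cell of length `1 / N` differ by less than `1 / N`. -/
lemma sub_lt_of_div_eq {p q p' q' N : ℕ} (hq : 0 < q) (hq' : 0 < q')
    (h : p * N / q = p' * N / q') : ((p : ℤ) * q' - p' * q) * N < q * q' := by
  set k := p * N / q with hk
  have h1 : p * N < (k + 1) * q := by
    rw [mul_comm (k + 1)]; exact Nat.lt_mul_div_succ _ hq
  have h2 : k * q' ≤ p' * N := by rw [h]; exact Nat.div_mul_le_self _ _
  have h3 : p * N * q' < (k + 1) * q * q' := Nat.mul_lt_mul_of_pos_right h1 hq'
  have h4 : k * q' * q ≤ p' * N * q := Nat.mul_le_mul_right _ h2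
  zify at h3 h4
  linarith

/-- For `q ≠ q'` write `q = g a` and `q' = g b` with `g = gcd q q'`. A pair `(p, p')` in a common
cell has `p b - p' a ≠ 0` and `|p b - p' a| < g a b / N`, and each value of `p b - p' a` is attained
by at most `g` pairs. -/
lemma card_sameCell_mul_le {q q' N : ℕ} (hq : 0 < q) (hq' : 0 < q') (hN : 0 < N) (hne : q ≠ q') :
    (sameCell q q' N).card * N ≤ 2 * (q * q') := by
  obtain ⟨g, a, b, hg, hab, rfl, rfl⟩ := Nat.exists_coprime' (Nat.gcd_pos_of_pos_left q' hq)
  have ha : 0 < a := Nat.pos_of_mul_pos_right hq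
  have hb : 0 < b := Nat.pos_of_mul_pos_right hq'
  set X : ℕ := a * b * g / N with hX
  have hmaps : Set.MapsTo
      (fun u : ℕ × ℕ => (((u.1 : ℤ) * b - u.2 * a, u.1 / a) : ℤ × ℕ))
      (sameCell (a * g) (b * g) N)
      (((Finset.Icc (-(X : ℤ)) X).erase 0 ×ˢ Finset.range g : Finset (ℤ × ℕ)) : Set (ℤ × ℕ)) := by
    rintro ⟨p, p'⟩ hu
    simp only [sameCell, Finset.coe_filter, Finset.mem_product, Finset.mem_range,
      Set.mem_ofPred_eq] at hu
    obtain ⟨⟨h1, h2⟩, h3, h4, h5⟩ := hu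
    have hg' : (0 : ℤ) < g := by exact_mod_cast hg
    have e1 := sub_lt_of_div_eq hq hq' h5
    have e2 := sub_lt_of_div_eq hq' hq h5.symm
    push_cast at e1 e2
    have e1' : ((p : ℤ) * b - p' * a) * N < a * b * g := by
      refine lt_of_mul_lt_mul_left (a := (g : ℤ)) ?_ hg'.le
      linarith
    have e2' : -((p : ℤ) * b - p' * a) * N < a * b * g := by
      refine lt_of_mul_lt_mul_left (a := (g : ℤ)) ?_ hg'.le
      linarith
    have hN' : (0 : ℤ) < N := by exact_mod_cast hN
    have f1 : (p : ℤ) * b - p' * a ≤ X := by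
      rw [hX]; push_cast
      exact (Int.le_ediv_iff_mul_le hN').2 e1'.le
    have f2 : -((p : ℤ) * b - p' * a) ≤ X := by
      rw [hX]; push_cast
      exact (Int.le_ediv_iff_mul_le hN').2 e2'.le
    simp only [Finset.coe_product, Set.mem_prod, Finset.mem_coe, Finset.mem_erase,
      Finset.mem_Icc, Finset.mem_range]
    refine ⟨⟨fun h0 => hne ?_, by linarith, f1⟩, Nat.div_lt_of_lt_mul h1⟩
    have h0' : p * b = p' * a := by
      have : (p : ℤ) * b = p' * a := by linarith
      exact_mod_cast this
    have ca : a ∣ b := (Nat.Coprime.coprime_dvd_left (Dvd.intro _ rfl) h3).dvd_of_dvd_mul_left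
      ⟨p', by rw [h0', mul_comm]⟩
    have cb : b ∣ a := (Nat.Coprime.coprime_dvd_left (Dvd.intro _ rfl) h4).dvd_of_dvd_mul_left
      ⟨p, by rw [← h0', mul_comm]⟩
    rw [Nat.dvd_antisymm ca cb]
  have hinj : Set.InjOn (fun u : ℕ × ℕ => (((u.1 : ℤ) * b - u.2 * a, u.1 / a) : ℤ × ℕ))
      (sameCell (a * g) (b * g) N) := by
    rintro ⟨p₁, p₁'⟩ - ⟨p₂, p₂'⟩ - h
    simp only [Prod.mk.injEq] at h
    obtain ⟨h1, h2⟩ := h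
    have hd : (a : ℤ) ∣ (p₂ - p₁) * b := ⟨p₂' - p₁', by linarith⟩
    have hd' : (a : ℤ) ∣ p₂ - p₁ :=
      (Nat.isCoprime_iff_coprime.2 hab).dvd_of_dvd_mul_right hd
    have hm : p₁ % a = p₂ % a := (Nat.modEq_iff_dvd).2 hd'
    have hp : p₁ = p₂ := by
      rw [← Nat.div_add_mod p₁ a, ← Nat.div_add_mod p₂ a, hm, h2]
    subst hp
    have ha' : (a : ℤ) ≠ 0 := by exact_mod_cast ha.ne'
    have hp' : (p₁' : ℤ) = p₂' := by
      refine mul_right_cancel₀ ha' ?_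
      linarith
    simpa using hp'
  have hcard := Finset.card_le_card_of_injOn _ hmaps hinj
  have h0 : (0 : ℤ) ∈ Finset.Icc (-(X : ℤ)) X := by simp
  rw [Finset.card_product, Finset.card_erase_of_mem h0, Int.card_Icc, Finset.card_range] at hcard
  have hc : ((X : ℤ) + 1 - -(X : ℤ)).toNat - 1 = 2 * X := by omega
  rw [hc] at hcard
  calc (sameCell (a * g) (b * g) N).card * N ≤ (2 * X * g) * N := Nat.mul_le_mul_right _ hcard
    _ = 2 * g * (X * N) := by ring
    _ ≤ 2 * g * (a * b * g) := Nat.mul_le_mul_left _ (Nat.div_mul_le_self _ _)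
    _ = 2 * (a * g * (b * g)) := by ring

lemma card_sameCell_self_mul_le {q N : ℕ} (hq : 0 < q) (hN : 0 < N) :
    (sameCell q q N).card * N ≤ q * (2 * q + N) := by
  set Y : ℕ := q / N with hY
  have hmaps : Set.MapsTo (fun u : ℕ × ℕ => ((u.1, (u.1 : ℤ) - u.2) : ℕ × ℤ)) (sameCell q q N)
      ((Finset.range q ×ˢ Finset.Icc (-(Y : ℤ)) Y : Finset (ℕ × ℤ)) : Set (ℕ × ℤ)) := by
    rintro ⟨p, p'⟩ hu
    simp only [sameCell, Finset.coe_filter, Finset.mem_product, Finset.mem_range,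
      Set.mem_ofPred_eq] at hu
    obtain ⟨⟨h1, h2⟩, h3, h4, h5⟩ := hu
    have hq' : (0 : ℤ) < q := by exact_mod_cast hq
    have hN' : (0 : ℤ) < N := by exact_mod_cast hN
    have e1 : ((p : ℤ) - p') * N < q := by
      refine lt_of_mul_lt_mul_left (a := (q : ℤ)) ?_ hq'.le
      linarith [sub_lt_of_div_eq hq hq h5]
    have e2 : -((p : ℤ) - p') * N < q := by
      refine lt_of_mul_lt_mul_left (a := (q : ℤ)) ?_ hq'.le
      linarith [sub_lt_of_div_eq hq hq h5.symm]
    have f1 : (p : ℤ) - p' ≤ Y := by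
      rw [hY]; push_cast
      exact (Int.le_ediv_iff_mul_le hN').2 e1.le
    have f2 : -((p : ℤ) - p') ≤ Y := by
      rw [hY]; push_cast
      exact (Int.le_ediv_iff_mul_le hN').2 e2.le
    simp only [Finset.coe_product, Set.mem_prod, Finset.mem_coe, Finset.mem_Icc, Finset.mem_range]
    exact ⟨h1, by linarith, f1⟩
  have hinj : Set.InjOn (fun u : ℕ × ℕ => ((u.1, (u.1 : ℤ) - u.2) : ℕ × ℤ)) (sameCell q q N) := by
    rintro ⟨p₁, p₁'⟩ - ⟨p₂, p₂'⟩ - h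
    simp only [Prod.mk.injEq] at h ⊢
    omega
  have hcard := Finset.card_le_card_of_injOn _ hmaps hinj
  rw [Finset.card_product, Int.card_Icc, Finset.card_range] at hcard
  have hc : ((Y : ℤ) + 1 - -(Y : ℤ)).toNat = 2 * Y + 1 := by omega
  rw [hc] at hcard
  calc (sameCell q q N).card * N ≤ (q * (2 * Y + 1)) * N := Nat.mul_le_mul_right _ hcard
    _ = q * (2 * (Y * N) + N) := by ring
    _ ≤ q * (2 * q + N) := by gcongr; exact Nat.div_mul_le_self _ _

/-- The cells of side length `1 / N` in `[0, 1)^n` containing a point all of whose coordinates are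
reduced fractions with one and the same denominator `q ∈ W`. -/
def hitCells (n : ℕ) (W : Finset ℕ) (N : ℕ) : Finset (Fin n → ℕ) :=
  (Fintype.piFinset fun _ => Finset.range N).filter fun κ =>
    ∑ q ∈ W, ∏ i, (cellNums q N (κ i)).card ≠ 0

lemma exists_of_mem_hitCells {n : ℕ} {W : Finset ℕ} {N : ℕ} {κ : Fin n → ℕ}
    (h : κ ∈ hitCells n W N) : (∀ i, κ i < N) ∧ ∃ q ∈ W, ∃ p : Fin n → ℕ,
      ∀ i, p i < q ∧ q.Coprime (p i) ∧ p i * N / q = κ i := by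
  obtain ⟨h1, h2⟩ := Finset.mem_filter.1 h
  refine ⟨fun i => Finset.mem_range.1 (Fintype.mem_piFinset.1 h1 i), ?_⟩
  obtain ⟨q, hq, h3⟩ := Finset.exists_ne_zero_of_sum_ne_zero h2
  have h4 : ∀ i, ∃ p, p ∈ cellNums q N (κ i) := fun i =>
    Finset.card_ne_zero.1 (Finset.prod_ne_zero_iff.1 h3 i (Finset.mem_univ i))
  choose p hp using h4
  refine ⟨q, hq, p, fun i => ?_⟩
  obtain ⟨a, b, c⟩ := Finset.mem_filter.1 (hp i)
  exact ⟨Finset.mem_range.1 a, b, c⟩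

/-- Cauchy–Schwarz: the square of the number of points is at most the number of cells hit times
the number of pairs of points in a common cell; both counts factor over the coordinates. -/
lemma sq_sum_totient_le (n : ℕ) (W : Finset ℕ) {N : ℕ} (hN : 0 < N) :
    (∑ q ∈ W, q.totient ^ n) ^ 2
      ≤ (hitCells n W N).card * ∑ q ∈ W, ∑ q' ∈ W, (sameCell q q' N).card ^ n := by
  set S : (Fin n → ℕ) → ℕ := fun κ => ∑ q ∈ W, ∏ i, (cellNums q N (κ i)).card with hS
  have h1 : ∑ q ∈ W, q.totient ^ n = ∑ κ ∈ hitCells n W N, S κ := by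
    rw [hitCells, Finset.sum_filter_ne_zero, Finset.sum_comm]
    refine Finset.sum_congr rfl fun q _ => ?_
    rw [← Finset.prod_univ_sum (t := fun _ : Fin n => Finset.range N)
      (f := fun _ j => (cellNums q N j).card), Finset.prod_const, sum_card_cellNums hN]
    simp
  have h2 : ∑ κ ∈ hitCells n W N, S κ ^ 2
      ≤ ∑ q ∈ W, ∑ q' ∈ W, (sameCell q q' N).card ^ n := by
    refine (Finset.sum_le_sum_of_subset (Finset.filter_subset _ _)).trans (le_of_eq ?_)
    simp_rw [hS, sq, Finset.sum_mul_sum]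
    rw [Finset.sum_comm]
    refine Finset.sum_congr rfl fun q _ => ?_
    rw [Finset.sum_comm]
    refine Finset.sum_congr rfl fun q' _ => ?_
    simp_rw [← Finset.prod_mul_distrib]
    rw [← Finset.prod_univ_sum (t := fun _ : Fin n => Finset.range N)
      (f := fun _ j => (cellNums q N j).card * (cellNums q' N j).card), Finset.prod_const,
      sum_card_cellNums_mul hN]
    simp
  rw [h1]
  exact sq_sum_le_card_mul_sum_sq.trans (Nat.mul_le_mul_left _ h2)

/-- If the denominators in `W` are comparable to `Q`, have `φ(q) / q` bounded below, and provide
enough points (`N ^ n ≤ |W| Q ^ n`), then a positive proportion of the `N ^ n` cells is hit. -/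
lemma le_card_hitCells {n N : ℕ} {W : Finset ℕ} {Q D : ℝ} (hN : 0 < N) (hQ : 0 < Q) (hD : 0 < D)
    (hW : ∀ q ∈ W, 0 < q ∧ Q ≤ D * q ∧ (q : ℝ) ≤ Q ∧ (q : ℝ) ≤ 16 * q.totient)
    (hbig : (N : ℝ) ^ n ≤ W.card * Q ^ n) :
    (N : ℝ) ^ n ≤ (16 * D) ^ (2 * n) * (2 ^ n + 3 ^ n) * (hitCells n W N).card := by
  have hN' : (0 : ℝ) < N := by exact_mod_cast hN
  have hw0 : (0 : ℝ) < W.card := by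
    have : 0 < (W.card : ℝ) * Q ^ n := lt_of_lt_of_le (by positivity) hbig
    exact pos_of_mul_pos_left this (by positivity)
  have hw1 : (1 : ℝ) ≤ W.card := Nat.one_le_cast.2 (Nat.cast_pos.1 hw0)
  set w : ℝ := (W.card : ℝ) with hw
  set I : ℝ := ((hitCells n W N).card : ℝ) with hI
  have hmain : (∑ q ∈ W, (q.totient : ℝ) ^ n) ^ 2
      ≤ I * ∑ q ∈ W, ∑ q' ∈ W, ((sameCell q q' N).card : ℝ) ^ n := by
    rw [hI]
    exact_mod_cast sq_sum_totient_le n W hN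
  have hlow : w * (Q / (16 * D)) ^ n ≤ ∑ q ∈ W, (q.totient : ℝ) ^ n := by
    rw [hw, ← nsmul_eq_mul]
    refine Finset.card_nsmul_le_sum _ _ _ fun q hq => ?_
    obtain ⟨-, h2, -, h4⟩ := hW q hq
    have : Q / (16 * D) ≤ q.totient := by
      rw [div_le_iff₀ (by positivity)]
      calc Q ≤ D * q := h2
        _ ≤ D * (16 * q.totient) := by gcongr
        _ = _ := by ring
    gcongr
  have hoff : ∀ q ∈ W, ∀ q' ∈ W, q ≠ q' →
      ((sameCell q q' N).card : ℝ) ^ n ≤ 2 ^ n * (Q ^ 2 / N) ^ n := by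
    intro q hq q' hq' hne
    obtain ⟨a1, -, a3, -⟩ := hW q hq
    obtain ⟨b1, -, b3, -⟩ := hW q' hq'
    have h : ((sameCell q q' N).card : ℝ) * N ≤ 2 * (q * q') := by
      exact_mod_cast card_sameCell_mul_le a1 b1 hN hne
    rw [← mul_pow]
    refine pow_le_pow_left₀ (by positivity) ?_ _
    rw [← mul_div_assoc, le_div_iff₀ hN', sq]
    exact h.trans (by gcongr)
  have hdiag : ∀ q ∈ W, ((sameCell q q N).card : ℝ) ^ n ≤ w * (3 ^ n * (Q ^ 2 / N) ^ n) := by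
    intro q hq
    obtain ⟨a1, -, a3, -⟩ := hW q hq
    have h : ((sameCell q q N).card : ℝ) * N ≤ q * (2 * q + N) := by
      exact_mod_cast card_sameCell_self_mul_le a1 hN
    have h' : ((sameCell q q N).card : ℝ) * N ≤ Q * (2 * Q + N) := h.trans (by gcongr)
    rcases le_total (N : ℝ) Q with hc | hc
    · have h1 : ((sameCell q q N).card : ℝ) ≤ 3 * (Q ^ 2 / N) := by
        rw [← mul_div_assoc, le_div_iff₀ hN']
        refine h'.trans ?_
        nlinarith
      calc ((sameCell q q N).card : ℝ) ^ n ≤ (3 * (Q ^ 2 / N)) ^ n := by gcongr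
        _ = 1 * (3 ^ n * (Q ^ 2 / N) ^ n) := by rw [mul_pow, one_mul]
        _ ≤ _ := by gcongr
    · have h1 : ((sameCell q q N).card : ℝ) ≤ 3 * Q := by
        refine le_of_mul_le_mul_right (h'.trans ?_) hN'
        nlinarith
      calc ((sameCell q q N).card : ℝ) ^ n ≤ (3 * Q) ^ n := by gcongr
        _ = 3 ^ n * ((Q / N) ^ n * N ^ n) := by
            rw [mul_pow, ← mul_pow (Q / N), div_mul_cancel₀ _ hN'.ne']
        _ ≤ 3 ^ n * ((Q / N) ^ n * (w * Q ^ n)) := by gcongr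
        _ = w * (3 ^ n * (Q ^ 2 / N) ^ n) := by
            rw [sq, mul_div_right_comm, mul_pow]; ring
  have hup : ∑ q ∈ W, ∑ q' ∈ W, ((sameCell q q' N).card : ℝ) ^ n
      ≤ w * (w * ((2 ^ n + 3 ^ n) * (Q ^ 2 / N) ^ n)) := by
    rw [hw, ← nsmul_eq_mul]
    refine Finset.sum_le_card_nsmul _ _ _ fun q hq => ?_
    rw [← Finset.add_sum_erase _ _ hq]
    have h1 : ∑ q' ∈ W.erase q, ((sameCell q q' N).card : ℝ) ^ n
        ≤ w * (2 ^ n * (Q ^ 2 / N) ^ n) := by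
      refine (Finset.sum_le_card_nsmul _ _ _ fun q' hq' => hoff q hq q'
        (Finset.mem_of_mem_erase hq') (Finset.ne_of_mem_erase hq').symm).trans ?_
      rw [nsmul_eq_mul]
      have : ((W.erase q).card : ℝ) ≤ w := by
        rw [hw]; exact_mod_cast Finset.card_le_card (Finset.erase_subset _ _)
      gcongr
    have h2 := hdiag q hq
    linarith
  have hfin : (w * (Q / (16 * D)) ^ n) ^ 2
      ≤ I * (w * (w * ((2 ^ n + 3 ^ n) * (Q ^ 2 / N) ^ n))) := by
    refine (pow_le_pow_left₀ (by positivity) hlow 2).trans (hmain.trans ?_)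
    gcongr
  have hc : (0 : ℝ) < w ^ 2 * (Q ^ 2) ^ n / ((16 * D) ^ (2 * n) * N ^ n) := by positivity
  refine le_of_mul_le_mul_left ?_ hc
  calc w ^ 2 * (Q ^ 2) ^ n / ((16 * D) ^ (2 * n) * N ^ n) * N ^ n
      = (w * (Q / (16 * D)) ^ n) ^ 2 := by
        rw [pow_right_comm Q, mul_comm 2 n, pow_mul (16 * D), div_pow]
        field_simp
    _ ≤ _ := hfin
    _ = _ := by
        rw [div_pow]
        field_simp

/-! ### The lower bound `n + 1` below the critical exponent -/

lemma le_rpow_neg_of_le {t y q : ℝ} (ht : 0 < t) (hy : 0 < y) (hq : 0 < q)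
    (h : q ≤ y ^ (1 / t)) : y⁻¹ ≤ q ^ (-t) := by
  rw [Real.rpow_neg hq.le]
  refine inv_anti₀ (by positivity) ?_
  calc q ^ t ≤ (y ^ (1 / t)) ^ t := by gcongr
    _ = y := by rw [← Real.rpow_mul hy.le, one_div_mul_cancel ht.ne', Real.rpow_one]

lemma rpow_neg_lt_of_lt {t y q : ℝ} (ht : 0 < t) (hy : 0 < y) (h : y ^ (1 / t) < q) :
    q ^ (-t) < y⁻¹ := by
  have hq : 0 < q := lt_trans (by positivity) h
  rw [Real.rpow_neg hq.le]
  refine inv_strictAnti₀ hy ?_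
  calc y = (y ^ (1 / t)) ^ t := by
        rw [← Real.rpow_mul hy.le, one_div_mul_cancel ht.ne', Real.rpow_one]
    _ < q ^ t := by gcongr

/-- For `N = m B` with `B` large, the denominators `q` whose height `q ^ (-t)` lies in
`[(m + k) / N, (m + k + 1) / N)` already give points above a positive proportion of the `N ^ n`
horizontal cells. There are about `B ^ (1 / t)` such `q`, each of size about `B ^ (1 / t)`, hence
about `B ^ ((n + 1) / t)` points, which exceeds `N ^ n` precisely because `t n < n + 1`. -/
lemma eventually_exists_denoms {n : ℕ} {t : ℝ} (ht : 0 < t) (htn : t * n < n + 1) {m k : ℕ}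
    (hk : k < m) : ∀ᶠ B : ℕ in atTop, ∃ W : Finset ℕ,
      (∀ q ∈ W, 2 ≤ q ∧ ((m + k : ℕ) : ℝ) / ((m * B : ℕ) : ℝ) ≤ (q : ℝ) ^ (-t) ∧
        (q : ℝ) ^ (-t) < ((m + k + 1 : ℕ) : ℝ) / ((m * B : ℕ) : ℝ)) ∧
      ((m * B : ℕ) : ℝ) ^ n ≤ (16 * (2 : ℝ) ^ (1 / t)) ^ (2 * n) * (2 ^ n + 3 ^ n)
        * (hitCells n W (m * B)).card := by
  have hm : 0 < m := by omega
  have hm0 : (0 : ℝ) < m := by exact_mod_cast hm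
  set u : ℝ := (m : ℝ) / ((m + k + 1 : ℕ) : ℝ) with hu
  set v : ℝ := (m : ℝ) / ((m + k : ℕ) : ℝ) with hv
  have hmk : (0 : ℝ) < ((m + k : ℕ) : ℝ) := by exact_mod_cast (by omega : 0 < m + k)
  have hu0 : 0 < u := by positivity
  have hv0 : 0 < v := by positivity
  have huv : u < v := by
    exact div_lt_div_of_pos_left hm0 hmk (by exact_mod_cast Nat.lt_succ_self (m + k))
  have hv1 : v ≤ 1 := by
    rw [hv, div_le_one hmk]
    exact_mod_cast Nat.le_add_right m k
  have hu2 : 1 ≤ 2 * u := by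
    rw [hu, ← mul_div_assoc, one_le_div (by positivity)]
    exact_mod_cast (by omega : m + k + 1 ≤ 2 * m)
  have ht' : 0 < 1 / t := by positivity
  set a : ℝ := u ^ (1 / t) with ha
  set b : ℝ := v ^ (1 / t) with hb
  have ha0 : 0 < a := by positivity
  have hab : a < b := Real.rpow_lt_rpow hu0.le huv ht'
  have hb1 : b ≤ 1 := Real.rpow_le_one hv0.le hv1 ht'.le
  have hDa : 1 ≤ (2 : ℝ) ^ (1 / t) * a := by
    rw [ha, ← Real.mul_rpow (by norm_num) hu0.le]
    exact Real.one_le_rpow hu2 ht'.le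
  set c : ℝ := (b - a) / 32 with hc
  have hc0 : 0 < c := by rw [hc]; linarith
  have hpow : Tendsto (fun Z : ℝ => Z ^ ((n : ℝ) + 1 - t * n)) atTop atTop :=
    tendsto_rpow_atTop (by linarith)
  have hZ : Tendsto (fun B : ℕ => (B : ℝ) ^ (1 / t)) atTop atTop :=
    (tendsto_rpow_atTop ht').comp tendsto_natCast_atTop_atTop
  filter_upwards [hZ.eventually (eventually_le_card_richDenoms ha0.le hab),
    hZ.eventually (hpow.eventually_ge_atTop ((m : ℝ) ^ n / c)),
    hZ.eventually_ge_atTop (1 / a), eventually_ge_atTop 1] with B h1 h2 h3 hB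
  have hB0 : (0 : ℝ) < B := by exact_mod_cast hB
  set Z : ℝ := (B : ℝ) ^ (1 / t) with hZdef
  have hZ0 : 0 < Z := by positivity
  have hZt : Z ^ t = B := by
    rw [hZdef, ← Real.rpow_mul hB0.le, one_div_mul_cancel ht.ne', Real.rpow_one]
  have hmem : ∀ q ∈ richDenoms a b Z, a * Z < q ∧ (q : ℝ) ≤ b * Z ∧ (q : ℝ) ≤ 16 * q.totient := by
    intro q hq
    obtain ⟨hq1, hq2⟩ := Finset.mem_filter.1 hq
    obtain ⟨hq3, hq4⟩ := Finset.mem_Ioc.1 hq1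
    exact ⟨Nat.lt_of_floor_lt hq3, (Nat.le_floor_iff (by positivity)).1 hq4, hq2⟩
  have haZ : 1 ≤ a * Z := by
    rw [div_le_iff₀ ha0] at h3
    linarith
  have ha' : a * Z = (u * B) ^ (1 / t) := by rw [Real.mul_rpow hu0.le hB0.le]
  have hb' : b * Z = (v * B) ^ (1 / t) := by rw [Real.mul_rpow hv0.le hB0.le]
  have hui : (u * B)⁻¹ = ((m + k + 1 : ℕ) : ℝ) / ((m * B : ℕ) : ℝ) := by
    rw [hu]; push_cast; rw [div_mul_eq_mul_div, inv_div]
  have hvi : (v * B)⁻¹ = ((m + k : ℕ) : ℝ) / ((m * B : ℕ) : ℝ) := by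
    rw [hv]; push_cast; rw [div_mul_eq_mul_div, inv_div]
  refine ⟨richDenoms a b Z, fun q hq => ?_, ?_⟩
  · obtain ⟨hq1, hq2, hq3⟩ := hmem q hq
    have hq0 : (1 : ℝ) < q := by linarith
    refine ⟨by exact_mod_cast hq0, ?_, ?_⟩
    · rw [← hvi]
      exact le_rpow_neg_of_le ht (by positivity) (by linarith) (by rw [← hb']; exact hq2)
    · rw [← hui]
      exact rpow_neg_lt_of_lt ht (by positivity) (by rw [← ha']; exact hq1)
  · refine le_card_hitCells (Q := Z) (by positivity) hZ0 (by positivity) (fun q hq => ?_) ?_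
    · obtain ⟨hq1, hq2, hq3⟩ := hmem q hq
      have hq0 : (0 : ℝ) < q := by linarith
      refine ⟨by exact_mod_cast hq0, ?_, ?_, hq3⟩
      · calc Z = 1 * Z := (one_mul Z).symm
          _ ≤ ((2 : ℝ) ^ (1 / t) * a) * Z := by gcongr
          _ = (2 : ℝ) ^ (1 / t) * (a * Z) := mul_assoc _ _ _
          _ ≤ _ := by gcongr
      · exact hq2.trans (by nlinarith)
    · rw [div_le_iff₀ hc0] at h2
      calc ((m * B : ℕ) : ℝ) ^ n = (m : ℝ) ^ n * Z ^ (t * n) := by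
            rw [Real.rpow_mul hZ0.le, hZt, Real.rpow_natCast]; push_cast; rw [mul_pow]
        _ ≤ (Z ^ ((n : ℝ) + 1 - t * n) * c) * Z ^ (t * n) := by gcongr
        _ = c * (Z ^ ((n : ℝ) + 1 - t * n) * Z ^ (t * n)) := by ring
        _ = c * Z * Z ^ n := by
            rw [← Real.rpow_add hZ0, sub_add_cancel, Real.rpow_add_one hZ0.ne',
              Real.rpow_natCast]
            ring
        _ ≤ _ := by gcongr

/-- The cell over the horizontal cell `κ` at level `h`. -/
def stackCell {n : ℕ} (h : ℕ) (κ : Fin n → ℕ) : Fin (n + 1) → ℤ :=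
  Fin.snoc (fun i => (κ i : ℤ)) (h : ℤ)

lemma stackCell_castSucc {n : ℕ} (h : ℕ) (κ : Fin n → ℕ) (i : Fin n) :
    stackCell h κ i.castSucc = κ i := by simp [stackCell]

lemma stackCell_last {n : ℕ} (h : ℕ) (κ : Fin n → ℕ) :
    stackCell h κ (Fin.last n) = h := by simp [stackCell]

/-- If every `q ∈ W` has height `q ^ (-t)` at level `h`, then the graph meets the cell at level
`h` over each cell of `hitCells n W N`. -/
lemma exists_mem_Gset_gridCell {n : ℕ} (hn : 1 ≤ n) {t : ℝ} {N h : ℕ} (hN : 0 < N) {W : Finset ℕ}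
    (hW : ∀ q ∈ W, 2 ≤ q ∧ (h : ℝ) / (N : ℝ) ≤ (q : ℝ) ^ (-t) ∧
      (q : ℝ) ^ (-t) < ((h + 1 : ℕ) : ℝ) / (N : ℝ))
    {κ : Fin n → ℕ} (hκ : κ ∈ hitCells n W N) :
    ∃ z ∈ Gset t (n + 1), gridCell (1 / (N : ℝ)) z = stackCell h κ := by
  obtain ⟨-, q, hq, p, hp⟩ := exists_of_mem_hitCells hκ
  obtain ⟨hq2, hlo, hhi⟩ := hW q hq
  have hN0 : (0 : ℝ) < N := by exact_mod_cast hN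
  have hq0 : (0 : ℝ) < q := by exact_mod_cast (by omega : 0 < q)
  have hp1 : ∀ i, 1 ≤ p i := by
    intro i
    by_contra h0
    have h0' : p i = 0 := by omega
    have := (hp i).2.1
    rw [h0', Nat.coprime_zero_right] at this
    omega
  set z : EuclideanSpace ℝ (Fin (n + 1)) :=
    WithLp.toLp 2 (Fin.snoc (fun i => (p i : ℝ) / q) ((q : ℝ) ^ (-t))) with hz
  have hzc : ∀ i : Fin n, z i.castSucc = (p i : ℝ) / q := by intro i; simp [hz]
  have hzl : z (Fin.last n) = (q : ℝ) ^ (-t) := by simp [hz]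
  refine ⟨z, mem_Gset_iff.2 ⟨fun i => ?_, ?_⟩, ?_⟩
  · rw [hzc]
    refine ⟨by positivity, ?_⟩
    rw [div_le_one hq0]
    exact_mod_cast (hp i).1.le
  · rw [hzl, popcornFun_div hn (fun i => ⟨hp1 i, (hp i).1, (hp i).2.1.symm⟩) hzc]
  · funext j
    refine Fin.lastCases ?_ (fun i => ?_) j
    · simp only [gridCell, hzl, stackCell_last]
      rw [div_le_iff₀ hN0] at hlo
      rw [lt_div_iff₀ hN0] at hhi
      push_cast at hhi
      rw [div_div_eq_mul_div, div_one, Int.floor_eq_iff]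
      push_cast
      exact ⟨hlo, hhi⟩
    · simp only [gridCell, hzc, stackCell_castSucc]
      have h1 : κ i * q ≤ p i * N := by
        rw [← (hp i).2.2]; exact Nat.div_mul_le_self _ _
      have h2 : p i * N < q * (κ i + 1) := by
        rw [← (hp i).2.2]; exact Nat.lt_mul_div_succ _ (by omega)
      have h1' : (κ i : ℝ) * q ≤ p i * N := by exact_mod_cast h1
      have h2' : (p i : ℝ) * N < q * (κ i + 1) := by exact_mod_cast h2
      rw [div_div_eq_mul_div, div_one, div_mul_eq_mul_div, Int.floor_eq_iff]
      push_cast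
      rw [le_div_iff₀ hq0, div_lt_iff₀ hq0]
      exact ⟨h1', by linarith⟩

/-- Points whose cells differ by less than `m` in some coordinate differ there by at most `m r`. -/
lemma abs_sub_le_of_gridCell {k : ℕ} {r : ℝ} (hr : 0 < r) {x z : EuclideanSpace ℝ (Fin k)}
    {m : ℕ} {j : Fin k} (h : |gridCell r z j - gridCell r x j| < m) :
    |z j - x j| ≤ m * r := by
  have e : ∀ y : EuclideanSpace ℝ (Fin k),
      (gridCell r y j : ℝ) * r ≤ y j ∧ y j < (gridCell r y j + 1) * r := by
    intro y
    rw [← le_div_iff₀ hr, ← div_lt_iff₀ hr]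
    exact ⟨Int.floor_le _, Int.lt_floor_add_one _⟩
  obtain ⟨x1, x2⟩ := e x
  obtain ⟨z1, z2⟩ := e z
  obtain ⟨h1, h2⟩ := abs_lt.1 h
  have h1' : (gridCell r x j : ℝ) + 1 ≤ gridCell r z j + m := by
    exact_mod_cast (by omega : gridCell r x j + 1 ≤ gridCell r z j + m)
  have h2' : (gridCell r z j : ℝ) + 1 ≤ gridCell r x j + m := by
    exact_mod_cast (by omega : gridCell r z j + 1 ≤ gridCell r x j + m)
  have h3 := mul_le_mul_of_nonneg_right h1' hr.le
  have h4 := mul_le_mul_of_nonneg_right h2' hr.le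
  rw [abs_le]
  constructor <;> linarith

lemma abs_sub_lt_of_div_eq {m a b : ℕ} (hm : 0 < m) (h : a / m = b / m) :
    |(a : ℤ) - b| < m := by
  have h1 := Nat.div_add_mod a m
  have h2 := Nat.div_add_mod b m
  have h3 := Nat.mod_lt a hm
  have h4 := Nat.mod_lt b hm
  rw [h] at h1
  rw [abs_lt]
  constructor <;> omega

/-- With `r = 1 / (m B)`, the levels `m, …, 2 m - 1` of cells of side `r` lie between the heights
`1 / B` and `2 / B`, and a positive proportion of the `m N ^ n` cells there is hit. So one of the
`B ^ n` blocks of side `1 / B = m r` contains a positive proportion of its `m ^ (n + 1)` cells. -/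
lemma succ_le_of_mem_assouadExp_Gset {n : ℕ} (hn : 1 ≤ n) {t α : ℝ} (ht : 0 < t)
    (htn : t * n < n + 1) (hα : α ∈ assouadExp (n + 1) (Gset t (n + 1))) :
    ((n + 1 : ℕ) : ℝ) ≤ α := by
  classical
  set C : ℝ := (16 * (2 : ℝ) ^ (1 / t)) ^ (2 * n) * (2 ^ n + 3 ^ n) with hC
  have hC0 : 0 < C := by positivity
  refine le_of_mem_assouadExp (c := 1 / C) (K := n + 2) hα (by positivity)
    (by linarith [n.cast_nonneg (α := ℝ)]) ?_
  intro m hm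
  have hm0 : (0 : ℝ) < m := by exact_mod_cast hm
  have hev : ∀ᶠ B : ℕ in atTop, ∀ k ∈ Finset.range m, ∃ W : Finset ℕ,
      (∀ q ∈ W, 2 ≤ q ∧ ((m + k : ℕ) : ℝ) / ((m * B : ℕ) : ℝ) ≤ (q : ℝ) ^ (-t) ∧
        (q : ℝ) ^ (-t) < ((m + k + 1 : ℕ) : ℝ) / ((m * B : ℕ) : ℝ)) ∧
      ((m * B : ℕ) : ℝ) ^ n ≤ C * (hitCells n W (m * B)).card := by
    rw [Filter.eventually_all_finset]
    intro k hk
    exact eventually_exists_denoms ht htn (Finset.mem_range.1 hk)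
  obtain ⟨B, hBk, hB⟩ := (hev.and (eventually_ge_atTop 1)).exists
  choose! W hW hcard using hBk
  have hB0 : (0 : ℝ) < B := by exact_mod_cast hB
  set N : ℕ := m * B with hN
  have hN1 : 0 < N := Nat.mul_pos hm hB
  have hN0 : (0 : ℝ) < N := by exact_mod_cast hN1
  set X : Finset (Σ _ : ℕ, (Fin n → ℕ)) :=
    (Finset.range m).sigma fun k => hitCells n (W k) N with hX
  have hXcard : (m : ℝ) * ((N : ℝ) ^ n / C) ≤ X.card := by
    rw [hX, Finset.card_sigma, Nat.cast_sum]
    have := Finset.card_nsmul_le_sum (Finset.range m)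
      (fun k => ((hitCells n (W k) N).card : ℝ)) ((N : ℝ) ^ n / C) (fun k hk => by
        rw [div_le_iff₀ hC0, mul_comm]; exact hcard k hk)
    simpa using this
  set blocks : Finset (Fin n → ℕ) := Fintype.piFinset fun _ => Finset.range B with hblocks
  obtain ⟨y, -, hy⟩ := Finset.exists_le_card_fiber_of_nsmul_le_card_of_maps_to (s := X)
    (t := blocks) (f := fun s i => s.2 i / m) (b := 1 / C * (m : ℝ) ^ (n + 1))
    (fun s hs => by
      rw [hblocks, Fintype.mem_piFinset]
      intro i
      have h1 := (exists_of_mem_hitCells (Finset.mem_sigma.1 hs).2).1 i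
      exact Finset.mem_range.2 (Nat.div_lt_of_lt_mul h1))
    (by
      refine ⟨fun _ => 0, ?_⟩
      rw [hblocks, Fintype.mem_piFinset]
      exact fun i => Finset.mem_range.2 hB)
    (by
      refine le_trans (le_of_eq ?_) hXcard
      rw [hblocks, Fintype.card_piFinset, nsmul_eq_mul, hN]
      simp only [Finset.card_range, Finset.prod_const, Finset.card_univ, Fintype.card_fin]
      push_cast
      rw [mul_pow, pow_succ]
      ring)
  set Y := X.filter fun s => (fun i => s.2 i / m) = y with hY
  have hpt : ∀ s ∈ Y, ∃ z ∈ Gset t (n + 1),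
      gridCell (1 / (N : ℝ)) z = stackCell (m + s.1) s.2 := by
    intro s hs
    obtain ⟨h1, h2⟩ := Finset.mem_sigma.1 (Finset.mem_filter.1 hs).1
    exact exists_mem_Gset_gridCell hn hN1 (hW s.1 h1) h2
  have hYne : Y.Nonempty := by
    rw [← Finset.card_pos]
    have : (0 : ℝ) < Y.card := lt_of_lt_of_le (by positivity) hy
    exact_mod_cast this
  obtain ⟨s₀, hs₀⟩ := hYne
  obtain ⟨x, hx, hxc⟩ := hpt s₀ hs₀
  refine ⟨x, hx, 1 / (N : ℝ), by positivity, Y.image fun s => stackCell (m + s.1) s.2, ?_, ?_⟩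
  · intro κ hκ
    obtain ⟨s, hs, rfl⟩ := Finset.mem_image.1 hκ
    obtain ⟨z, hz, hzc⟩ := hpt s hs
    refine ⟨z, ⟨?_, hz⟩, hzc⟩
    have hw : (0 : ℝ) ≤ m * (1 / N) := by positivity
    refine Metric.closedBall_subset_closedBall ?_ (mem_closedBall_of_abs_le hw fun j => ?_)
    · rw [mul_assoc]
      refine mul_le_mul_of_nonneg_right ?_ hw
      push_cast
      linarith
    · refine abs_sub_le_of_gridCell (by positivity) ?_
      rw [hzc, hxc]
      obtain ⟨hs1, hs2⟩ := Finset.mem_filter.1 hs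
      obtain ⟨hs3, hs4⟩ := Finset.mem_filter.1 hs₀
      refine Fin.lastCases ?_ (fun i => ?_) j
      · rw [stackCell_last, stackCell_last]
        have a1 : s.1 < m := Finset.mem_range.1 (Finset.mem_sigma.1 hs1).1
        have a2 : s₀.1 < m := Finset.mem_range.1 (Finset.mem_sigma.1 hs3).1
        rw [abs_lt]
        push_cast
        constructor <;> omega
      · rw [stackCell_castSucc, stackCell_castSucc]
        exact abs_sub_lt_of_div_eq hm ((congrFun hs2 i).trans (congrFun hs4 i).symm)
  · rw [Finset.card_image_of_injective]
    · exact hy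
    · rintro ⟨k, κ⟩ ⟨k', κ'⟩ h
      have e1 := congrFun h (Fin.last n)
      simp only [stackCell_last] at e1
      have e2 : κ = κ' := by
        funext i
        have := congrFun h i.castSucc
        simpa only [stackCell_castSucc, Nat.cast_inj] using this
      have e3 : k = k' := by push_cast at e1; omega
      rw [e2, e3]

/-! ### The Assouad dimensions -/

/-- Lower bounds for the exponents of the graph and upper bounds for those of `F_{t,d}` apply to
every set in between; this is used for the two extreme sets. -/
lemma assouadDim_of_Gset_subset_of_subset_Fset {n : ℕ} (hn : 1 ≤ n) {t : ℝ} {S : Set (EuclideanSpace ℝ (Fin (n + 1)))}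
    (hGS : Gset t (n + 1) ⊆ S) (hSF : S ⊆ Fset t (n + 1)) :
    (0 < t → t * n < n + 1 → assouadDim (n + 1) S = n + 1) ∧
    ((n : ℝ) + 1 ≤ t * n → assouadDim (n + 1) S = n) := by
  have hne : ((n + 1 : ℕ) : ℝ) ∈ assouadExp (n + 1) S := natCast_mem_assouadExp _ _
  have hlow : ∀ α ∈ assouadExp (n + 1) S, (n : ℝ) ≤ α := fun α hα =>
    le_of_mem_assouadExp_Gset hn (assouadExp_anti hGS hα)
  constructor
  · intro ht htn
    refine le_antisymm ?_ ?_
    · have := csInf_le ⟨_, hlow⟩ hne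
      push_cast at this
      exact this
    · have := le_csInf ⟨_, hne⟩ fun α hα =>
        succ_le_of_mem_assouadExp_Gset hn ht htn (assouadExp_anti hGS hα)
      push_cast at this
      exact this
  · intro htn
    refine le_antisymm (le_of_forall_pos_le_add fun ε hε => ?_) (le_csInf ⟨_, hne⟩ hlow)
    exact csInf_le ⟨_, hlow⟩ (assouadExp_anti hSF (add_mem_assouadExp_Fset hn htn hε))

/-- the Assouad dimensions of `G_{t,d}` and `F_{t,d}` coincide, and equal `d`
if `0 < t < d/(d-1)` and `d-1` if `t ≥ d/(d-1)`. -/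
theorem assouad_dimension_of_popcorn_sets (d : ℕ) (hd : 2 ≤ d) (t : ℝ) (ht : 0 < t) :
    assouadDim d (Gset t d) = assouadDim d (Fset t d) ∧
    (t < (d:ℝ)/((d:ℝ)-1) →
      assouadDim d (Gset t d) = (d:ℝ) ∧ assouadDim d (Fset t d) = (d:ℝ)) ∧
    ((d:ℝ)/((d:ℝ)-1) ≤ t →
      assouadDim d (Gset t d) = (d:ℝ) - 1 ∧ assouadDim d (Fset t d) = (d:ℝ) - 1) := by
  obtain ⟨n, rfl⟩ : ∃ n, d = n + 1 := ⟨d - 1, by omega⟩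
  have hn : 1 ≤ n := by omega
  have hn0 : (0 : ℝ) < n := by exact_mod_cast hn
  obtain ⟨g1, g2⟩ := assouadDim_of_Gset_subset_of_subset_Fset (t := t) hn subset_rfl Gset_subset_Fset
  obtain ⟨f1, f2⟩ := assouadDim_of_Gset_subset_of_subset_Fset (t := t) hn Gset_subset_Fset subset_rfl
  push_cast
  rw [add_sub_cancel_right, lt_div_iff₀ hn0, div_le_iff₀ hn0]
  refine ⟨?_, fun h => ⟨g1 ht h, f1 ht h⟩, fun h => ⟨g2 h, f2 h⟩⟩
  rcases lt_or_ge (t * n) (n + 1) with h | h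
  · rw [g1 ht h, f1 ht h]
  · rw [g2 h, f2 h]
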